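/- arXiv:1212.4261 — 8 statements merged into one kernel-verified Lean document; each statement's English description precedes it below -/
import Mathlib

section
/- Let N ≥ 3 be an odd integer, m = (N−1)/2, ζ = exp(2πi/N), and let S, T be the N×N matrices with entries S_i^j = N^{−1/2} ζ^{ij} and T_i^j = ζ^{(m+1)i²} δ_N(i+j). Then (ST)³ = φ_N S², where φ_N = ((m+1)/N) if N ≡ 1 mod 4 and φ_N = ((m+1)/N)·i if N ≡ 3 mod 4, ((m+1)/N) denoting the Legendre–Jacobi quadratic symbol. -/
/-!
Write `e(x) = exp(2πi x / N)` for `x : ZMod N`, and let `h = m + 1`, which is the inverse of `2`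
modulo `N`. Over `ZMod N` one has `(ST)_{ij} = N^{-1/2} e(h j² - i j)`. Completing the square
gives `(ST)²_{ij} = N^{-1} G e(-h i² - i j)` with the Gauss sum `G = ∑ e(h x²)`, and orthogonality
of characters then gives `(ST)³ = (G / √N) S²`. What remains is `G = φ √N`.

The value of `G` for every odd `N`, prime or not, is found by Gauss's method. The
Rogers–Szegő polynomials `∑ₖ [n, k]_q Xᵏ` satisfy a three-term recurrence which at `X = -1`
becomes `h_{n+2}(-1) = (1 - q^{n+1}) h_n(-1)`. For `q = e(-1)` and `n = N - 1` the `q`-binomial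
coefficients are `(-1)ᵏ e(k(k+1)/2)`, so `h_{N-1}(-1)` is `e(-h³) G` on the one hand, and
`∏_{i<m} (1 - q^{2i+1})` on the other. Each factor is a positive real `2 sin(π(2i+1)/N)` times
an explicit phase, and `|G|² = N` by orthogonality, so `G` is `√N` times the product of the
phases. This product is matched with the Jacobi symbol `(2/N) = χ₈(N)` according to `N mod 8`.
-/

open Polynomial in
/-- The Rogers–Szegő polynomial `∑ₖ [n, k]_q Xᵏ`, defined through the `q`-Pascal rule
`h_{n+1}(X) = X h_n(X) + h_n(qX)`. -/
noncomputable def rogersSzego (q : ℂ) : ℕ → ℂ[X]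
  | 0 => 1
  | n + 1 => X * rogersSzego q n + (rogersSzego q n).comp (C q * X)

open Polynomial in
/-- The action of `X ↦ qX` on the Rogers–Szegő polynomials; on coefficients this is
`(1 - qᵏ) [n+1, k]_q = (1 - q^{n+1}) [n, k-1]_q`. -/
lemma rogersSzego_comp (q : ℂ) (n : ℕ) :
    (rogersSzego q (n + 1)).comp (C q * X) =
      rogersSzego q (n + 1) - (1 - C q ^ (n + 1)) * X * rogersSzego q n := by
  induction n with
  | zero => simp [rogersSzego]; ring
  | succ n ih =>
    have h1 : rogersSzego q (n + 2) =
      X * rogersSzego q (n + 1) + (rogersSzego q (n + 1)).comp (C q * X) := rfl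
    have h0 : rogersSzego q (n + 1) =
      X * rogersSzego q n + (rogersSzego q n).comp (C q * X) := rfl
    have h2 : (rogersSzego q (n + 2)).comp (C q * X) =
        C q * X * (rogersSzego q (n + 1)).comp (C q * X) +
          ((rogersSzego q (n + 1)).comp (C q * X)).comp (C q * X) := by
      rw [h1]; simp
    have h3 : ((rogersSzego q (n + 1)).comp (C q * X)).comp (C q * X) =
        (rogersSzego q (n + 1)).comp (C q * X) -
          (1 - C q ^ (n + 1)) * (C q * X) * (rogersSzego q n).comp (C q * X) := by
      conv_lhs => rw [ih]
      simp
    rw [h2, h3, h1]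
    linear_combination (C q * X) * ih + (1 - C q ^ (n + 1)) * C q * X * h0

lemma rogersSzego_eval_neg_one (q : ℂ) (n : ℕ) :
    (rogersSzego q (n + 2)).eval (-1) = (1 - q ^ (n + 1)) * (rogersSzego q n).eval (-1) := by
  have h1 : rogersSzego q (n + 2) = Polynomial.X * rogersSzego q (n + 1) +
    (rogersSzego q (n + 1)).comp (Polynomial.C q * Polynomial.X) := rfl
  rw [h1, rogersSzego_comp]
  simp
  ring

lemma rogersSzego_eval_prod (q : ℂ) (m : ℕ) :
    (rogersSzego q (2 * m)).eval (-1) = ∏ i ∈ Finset.range m, (1 - q ^ (2 * i + 1)) := by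
  induction m with
  | zero => simp [rogersSzego]
  | succ m ih =>
    rw [Finset.prod_range_succ, ← ih, mul_add, mul_one, rogersSzego_eval_neg_one]; ring

lemma rogersSzego_natDegree (q : ℂ) (n : ℕ) : (rogersSzego q n).natDegree ≤ n := by
  induction n with
  | zero => simp [rogersSzego]
  | succ n ih =>
    refine (Polynomial.natDegree_add_le _ _).trans (max_le ?_ ?_)
    · refine Polynomial.natDegree_mul_le.trans ?_
      simp only [Polynomial.natDegree_X]; omega
    · refine Polynomial.natDegree_comp_le.trans ?_
      have : (Polynomial.C q * Polynomial.X).natDegree ≤ 1 := Polynomial.natDegree_C_mul_le _ _ |>.trans Polynomial.natDegree_X_le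
      nlinarith

lemma rogersSzego_coeff_zero (q : ℂ) (n : ℕ) : (rogersSzego q n).coeff 0 = 1 := by
  induction n with
  | zero => simp [rogersSzego]
  | succ n ih => simp [rogersSzego, ih, Polynomial.comp_C_mul_X_coeff]

/-- The ratio of consecutive `q`-binomial coefficients `[n, k]_q`. -/
lemma rogersSzego_coeff_succ (q : ℂ) (n k : ℕ) :
    q ^ (k + 1) * (1 - q ^ (k + 1)) * (rogersSzego q n).coeff (k + 1) =
      (q ^ (k + 1) - q ^ (n + 1)) * (rogersSzego q n).coeff k := by
  have h1 : (rogersSzego q (n + 1)).coeff (k + 1) = (rogersSzego q n).coeff k +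
      (rogersSzego q n).coeff (k + 1) * q ^ (k + 1) := by
    simp [rogersSzego, Polynomial.comp_C_mul_X_coeff]
  have h2 := congrArg (fun p => p.coeff (k + 1)) (rogersSzego_comp q n)
  have h3 : (1 - Polynomial.C q ^ (n + 1)) * Polynomial.X * rogersSzego q n =
      Polynomial.C (1 - q ^ (n + 1)) * (Polynomial.X * rogersSzego q n) := by
    simp [mul_assoc]
  rw [h3] at h2
  simp only [Polynomial.comp_C_mul_X_coeff, Polynomial.coeff_sub, Polynomial.coeff_C_mul,
    Polynomial.coeff_X_mul] at h2
  linear_combination (q ^ (k + 1) - 1) * h1 - h2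

/-- Reduction modulo `N` as a bijection from `Fin N`. -/
noncomputable def finZModEquiv (N : ℕ) [NeZero N] : Fin N ≃ ZMod N where
  toFun i := (i.val : ZMod N)
  invFun x := ⟨x.val, ZMod.val_lt x⟩
  left_inv i := by ext; simp [ZMod.val_natCast, Nat.mod_eq_of_lt i.isLt]
  right_inv x := by simp

lemma sum_zmod_eq_sum_range (N : ℕ) [NeZero N] (F : ZMod N → ℂ) :
    ∑ x, F x = ∑ k ∈ Finset.range N, F k := by
  rw [← Equiv.sum_comp (finZModEquiv N), ← Fin.sum_univ_eq_sum_range (fun k => F (k : ZMod N))]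
  rfl

/-- The quadratic Gauss sum `∑ e(h x²)` modulo `N`. -/
noncomputable def quadGauss (N : ℕ) [NeZero N] (h : ZMod N) : ℂ :=
  ∑ x : ZMod N, ZMod.stdAddChar (h * x ^ 2)

section
variable {N : ℕ} [NeZero N]

lemma stdAddChar_neg_one_pow (k : ℕ) :
    (ZMod.stdAddChar (-1 : ZMod N)) ^ k = ZMod.stdAddChar (-(k : ZMod N)) := by
  rw [← AddChar.map_nsmul_eq_pow]; congr 1; simp

lemma sum_char (b : ZMod N) :
    ∑ x : ZMod N, ZMod.stdAddChar (x * b) = if b = 0 then (N : ℂ) else 0 := by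
  rw [AddChar.sum_mulShift b (ZMod.isPrimitive_stdAddChar N)]
  split_ifs <;> simp

lemma quadGauss_shift (h c : ZMod N) :
    ∑ x : ZMod N, ZMod.stdAddChar (h * (x + c) ^ 2) = quadGauss N h :=
  Equiv.sum_comp (Equiv.addRight c) (fun x => ZMod.stdAddChar (h * x ^ 2))

lemma rogersSzego_coeff_root (h : ZMod N) (h2 : 2 * h = 1) (k : ℕ) (hk : k < N) :
    (rogersSzego (ZMod.stdAddChar (-1 : ZMod N)) (N - 1)).coeff k * (-1) ^ k =
      ZMod.stdAddChar (h * ((k : ZMod N) ^ 2 + (k : ZMod N))) := by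
  induction k with
  | zero => simp [rogersSzego_coeff_zero]
  | succ k ih =>
    have ih := ih (by omega)
    have key := rogersSzego_coeff_succ (ZMod.stdAddChar (-1 : ZMod N)) (N - 1) k
    rw [show N - 1 + 1 = N by omega, stdAddChar_neg_one_pow, stdAddChar_neg_one_pow] at key
    have hne : ZMod.stdAddChar (-((k + 1 : ℕ) : ZMod N)) ≠ (1 : ℂ) := by
      intro hc
      rw [← AddChar.map_zero_eq_one (ZMod.stdAddChar (N := N))] at hc
      have := ZMod.injective_stdAddChar hc
      rw [neg_eq_zero, ZMod.natCast_eq_zero_iff] at this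
      exact absurd (Nat.le_of_dvd (by omega) this) (by omega)
    have h4 : (h * (((k + 1 : ℕ) : ZMod N) ^ 2 + ((k + 1 : ℕ) : ZMod N))) =
        h * ((k : ZMod N) ^ 2 + k) + ((k + 1 : ℕ) : ZMod N) := by
      push_cast; linear_combination ((k : ZMod N) + 1) * h2
    have h5 : ZMod.stdAddChar (-((k + 1 : ℕ) : ZMod N)) *
        ZMod.stdAddChar (((k + 1 : ℕ) : ZMod N)) = (1 : ℂ) := by
      rw [← AddChar.map_add_eq_mul]; simp
    rw [h4, AddChar.map_add_eq_mul, ← ih]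
    simp only [CharP.cast_eq_zero, neg_zero, AddChar.map_zero_eq_one] at key
    set Q : ℂ := ZMod.stdAddChar (-((k + 1 : ℕ) : ZMod N))
    set E : ℂ := ZMod.stdAddChar (((k + 1 : ℕ) : ZMod N))
    have h6 : (1 - Q) ≠ 0 := sub_ne_zero.mpr (Ne.symm hne)
    apply mul_left_cancel₀ h6
    rw [pow_succ]
    linear_combination (-E * (-1) ^ k) * key +
      ((1 - Q) * (rogersSzego (ZMod.stdAddChar (-1 : ZMod N)) (N - 1)).coeff (k + 1) *
        (-1) ^ k) * h5

/-- Gauss's product formula for the quadratic Gauss sum. -/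
lemma quadGauss_eq_prod (h : ZMod N) (h2 : 2 * h = 1) (m : ℕ) (hm : N = 2 * m + 1) :
    quadGauss N h = ZMod.stdAddChar (h ^ 3) *
      ∏ i ∈ Finset.range m, (1 - (ZMod.stdAddChar (-1 : ZMod N)) ^ (2 * i + 1)) := by
  have hN : N - 1 = 2 * m := by omega
  rw [← rogersSzego_eval_prod, Polynomial.eval_eq_sum_range' (n := N), Finset.mul_sum,
    ← quadGauss_shift h h, sum_zmod_eq_sum_range]
  · refine Finset.sum_congr rfl fun k hk => ?_
    rw [← hN, rogersSzego_coeff_root h h2 k (Finset.mem_range.mp hk), ← AddChar.map_add_eq_mul]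
    congr 1
    linear_combination (h * (k : ZMod N)) * h2
  · exact (rogersSzego_natDegree _ _).trans_lt (by omega)

lemma quadGauss_norm (h : ZMod N) (h2 : 2 * h = 1) : ‖quadGauss N h‖ = Real.sqrt N := by
  have key : quadGauss N h * (starRingEnd ℂ) (quadGauss N h) = N := by
    have : quadGauss N h * (starRingEnd ℂ) (quadGauss N h) =
        ∑ y : ZMod N, ∑ d : ZMod N,
          ZMod.stdAddChar (h * d ^ 2) * (ZMod.stdAddChar (y * d) : ℂ) := by
      conv_lhs => rw [quadGauss, map_sum, Finset.mul_sum]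
      refine Finset.sum_congr rfl fun y _ => ?_
      change quadGauss N h * _ = _
      rw [← quadGauss_shift h y, Finset.sum_mul]
      refine Finset.sum_congr rfl fun d _ => ?_
      rw [← AddChar.map_neg_eq_conj, ← AddChar.map_add_eq_mul, ← AddChar.map_add_eq_mul]
      congr 1
      linear_combination (y * d) * h2
    rw [this, Finset.sum_comm]
    simp_rw [← Finset.mul_sum, sum_char]
    simp
  rw [Complex.mul_conj, Complex.normSq_eq_norm_sq] at key
  have key' : ‖quadGauss N h‖ ^ 2 = N := by exact_mod_cast key
  rw [← key', Real.sqrt_sq (norm_nonneg _)]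

end

/-- `1 - e^{-2iθ} = 2 sin θ · i e^{-iθ}` at `θ = π(2i+1)/N`. -/
lemma one_sub_stdAddChar_pow (N : ℕ) [NeZero N] (i : ℕ) :
    1 - (ZMod.stdAddChar (-1 : ZMod N)) ^ (2 * i + 1) =
      ((2 * Real.sin (Real.pi * (2 * i + 1) / N) : ℝ) : ℂ) *
        (Complex.I * Complex.exp (-(Real.pi * Complex.I / N) * (2 * i + 1))) := by
  rw [stdAddChar_neg_one_pow]
  have h1 : (-((2 * i + 1 : ℕ) : ZMod N)) = ((-(2 * i + 1) : ℤ) : ZMod N) := by push_cast; ring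
  rw [h1, ZMod.stdAddChar_coe]
  set θ : ℂ := Real.pi * (2 * i + 1) / N with hθ
  have e1 : 2 * Real.pi * Complex.I * ((-(2 * i + 1) : ℤ) : ℂ) / N
      = -θ * Complex.I + -θ * Complex.I := by
    rw [hθ]; push_cast; ring
  have e2 : -(Real.pi * Complex.I / N) * (2 * i + 1) = -θ * Complex.I := by rw [hθ]; ring
  rw [e1, e2]
  push_cast
  rw [← hθ, Complex.sin, Complex.exp_add]
  have e3 : Complex.exp (-θ * Complex.I) * Complex.exp (θ * Complex.I) = 1 := by
    rw [← Complex.exp_add]; simp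
  linear_combination (-1 : ℂ) * e3 + ((Complex.exp (-θ * Complex.I) - Complex.exp (θ * Complex.I))
    * Complex.exp (-θ * Complex.I)) * (-Complex.I_mul_I)

lemma prod_phase (c : ℂ) (m : ℕ) :
    ∏ i ∈ Finset.range m, (Complex.I * Complex.exp (c * (2 * i + 1))) =
      Complex.I ^ m * Complex.exp (c * m ^ 2) := by
  induction m with
  | zero => simp
  | succ m ih =>
    rw [Finset.prod_range_succ, ih, mul_mul_mul_comm, ← pow_succ, ← Complex.exp_add]
    congr 2; push_cast; ring

/-- The Gauss sum is `√N` times the product of the phases of its factors. -/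
lemma quadGauss_eq_phase (N : ℕ) [NeZero N] (h : ZMod N) (h2 : 2 * h = 1) (m : ℕ)
    (hm : N = 2 * m + 1) :
    quadGauss N h = Real.sqrt N * (ZMod.stdAddChar (h ^ 3) *
      (Complex.I ^ m * Complex.exp (-(Real.pi * Complex.I / N) * m ^ 2))) := by
  have hN0 : (0 : ℝ) < N := by exact_mod_cast Nat.pos_of_ne_zero (NeZero.ne N)
  have h1 := quadGauss_eq_prod h h2 m hm
  simp_rw [one_sub_stdAddChar_pow] at h1
  rw [Finset.prod_mul_distrib, prod_phase, ← Complex.ofReal_prod] at h1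
  set R : ℝ := ∏ i ∈ Finset.range m, 2 * Real.sin (Real.pi * (2 * i + 1) / N) with hR
  have hRpos : 0 ≤ R := by
    refine Finset.prod_nonneg fun i hi => mul_nonneg (by norm_num) ?_
    have hi := Finset.mem_range.mp hi
    have hle : (2 * i + 1 : ℝ) ≤ N := by rw [hm]; norm_cast; omega
    refine Real.sin_nonneg_of_nonneg_of_le_pi (by positivity) ?_
    rw [div_le_iff₀ hN0]
    exact mul_le_mul_of_nonneg_left hle Real.pi_pos.le
  have hexp : ‖Complex.exp (-(Real.pi * Complex.I / N) * m ^ 2)‖ = 1 := by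
    rw [show -(Real.pi * Complex.I / N) * m ^ 2 =
      ((-(Real.pi / N) * m ^ 2 : ℝ) : ℂ) * Complex.I by push_cast; ring]
    exact Complex.norm_exp_ofReal_mul_I _
  have hn := quadGauss_norm h h2
  rw [h1] at hn
  simp only [norm_mul, AddChar.norm_apply, norm_pow, Complex.norm_I, hexp, one_pow, mul_one,
    one_mul, Complex.norm_real, Real.norm_of_nonneg hRpos] at hn
  rw [h1, hn]; ring

lemma jacobi_half (N m : ℕ) (hm : N = 2 * m + 1) :
    jacobiSym ((m : ℤ) + 1) N = ZMod.χ₈ (N : ZMod 8) := by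
  have hodd : Odd N := ⟨m, hm⟩
  rw [← jacobiSym.at_two hodd]
  have h1 : jacobiSym 2 N * jacobiSym ((m : ℤ) + 1) N = 1 := by
    rw [← jacobiSym.mul_left, jacobiSym.mod_left' (b := N) (a₂ := 1), jacobiSym.one_left]
    rw [hm]; push_cast
    rw [show (2 * ((m : ℤ) + 1)) = 1 + (2 * m + 1) by ring, Int.add_emod_right]
  rcases Int.mul_eq_one_iff_eq_one_or_neg_one.mp h1 with ⟨a, b⟩ | ⟨a, b⟩ <;> rw [a, b]

/-- Evaluation of the quadratic Gauss sum at `h = 1/2` for every odd modulus. -/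
lemma quadGauss_value (N : ℕ) [NeZero N] (m : ℕ) (hm : N = 2 * m + 1) :
    quadGauss N ((m + 1 : ℕ) : ZMod N) = Real.sqrt N *
      (if N % 4 = 1 then ((jacobiSym ((m : ℤ) + 1) N : ℤ) : ℂ)
        else ((jacobiSym ((m : ℤ) + 1) N : ℤ) : ℂ) * Complex.I) := by
  have hz : (2 * (m : ZMod N) + 1) = 0 := by
    have := ZMod.natCast_self N
    rw [show ((N : ℕ) : ZMod N) = ((2 * m + 1 : ℕ) : ZMod N) by rw [← hm]] at this
    exact_mod_cast this
  have hNC : (N : ℂ) ≠ 0 := by exact_mod_cast NeZero.ne N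
  have h2 : 2 * ((m + 1 : ℕ) : ZMod N) = 1 := by push_cast; linear_combination hz
  rw [quadGauss_eq_phase N _ h2 m hm, jacobi_half N m hm]
  congr 1
  have hNc : (N : ℂ) = 2 * m + 1 := by exact_mod_cast hm
  rcases Nat.even_or_odd' m with ⟨r, hr | hr⟩
  · have hN4 : N % 4 = 1 := by omega
    have hrz : (m : ZMod N) = 2 * r := by rw [hr]; push_cast; ring
    -- here `exp(-πi m²/N) = e(-2r²)`, which cancels `e(h³)`
    have e1 : Complex.exp (-(Real.pi * Complex.I / N) * m ^ 2) =
        ZMod.stdAddChar ((-(2 * r ^ 2) : ℤ) : ZMod N) := by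
      rw [ZMod.stdAddChar_coe]; congr 1; rw [hr]; push_cast; ring
    have e2 : (((m + 1 : ℕ) : ZMod N)) ^ 3 + ((-(2 * r ^ 2) : ℤ) : ZMod N) = 0 := by
      push_cast
      rw [hrz] at hz ⊢
      linear_combination (2 * (r : ZMod N) ^ 2 + 2 * r + 1) * hz
    rw [e1, mul_left_comm, ← AddChar.map_add_eq_mul, e2, AddChar.map_zero_eq_one, mul_one,
      if_pos hN4, hr, pow_mul, Complex.I_sq]
    rcases Nat.even_or_odd' r with ⟨s, hs | hs⟩
    · have : (N : ZMod 8) = 1 := by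
        rw [show N = 8 * s + 1 by omega]; push_cast; rw [show (8 : ZMod 8) = 0 from rfl]; simp
      rw [this, hs]; simp
    · have : (N : ZMod 8) = 5 := by
        rw [show N = 8 * s + 5 by omega]; push_cast; rw [show (8 : ZMod 8) = 0 from rfl]; simp
      rw [this, hs, show ZMod.χ₈ 5 = -1 from rfl]; simp [pow_succ]
  · have hN4 : ¬ N % 4 = 1 := by omega
    have hrz : (m : ZMod N) = 2 * r + 1 := by rw [hr]; push_cast; ring
    -- `m²` is odd, so the exponent is first shifted by `πi` to bring in `m² + N = 4(r+1)²`
    have e1 : Complex.exp (-(Real.pi * Complex.I / N) * m ^ 2) =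
        -ZMod.stdAddChar ((-(2 * (r + 1) ^ 2) : ℤ) : ZMod N) := by
      have : -(Real.pi * Complex.I / N) * m ^ 2 =
          2 * Real.pi * Complex.I * ((-(2 * (r + 1) ^ 2) : ℤ) : ℂ) / N + Real.pi * Complex.I := by
        field_simp
        rw [hNc, hr]; push_cast; ring
      rw [ZMod.stdAddChar_coe, this, Complex.exp_add, Complex.exp_pi_mul_I]; ring
    have e2 : (((m + 1 : ℕ) : ZMod N)) ^ 3 + ((-(2 * (r + 1) ^ 2) : ℤ) : ZMod N) = 0 := by
      push_cast
      rw [hrz] at hz ⊢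
      linear_combination (2 * ((r : ZMod N) + 1) ^ 2) * hz
    rw [e1, mul_left_comm, mul_neg, ← AddChar.map_add_eq_mul, e2, AddChar.map_zero_eq_one,
      if_neg hN4, hr, pow_succ, pow_mul, Complex.I_sq]
    rcases Nat.even_or_odd' r with ⟨s, hs | hs⟩
    · have : (N : ZMod 8) = 3 := by
        rw [show N = 8 * s + 3 by omega]; push_cast; rw [show (8 : ZMod 8) = 0 from rfl]; simp
      rw [this, hs, show ZMod.χ₈ 3 = -1 from rfl]; simp
    · have : (N : ZMod 8) = 7 := by
        rw [show N = 8 * s + 7 by omega]; push_cast; rw [show (8 : ZMod 8) = 0 from rfl]; simp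
      rw [this, hs, show ZMod.χ₈ 7 = 1 from rfl]; simp [pow_succ]

/-- The matrix identity over `ZMod N`, with the Gauss sum left unevaluated and an arbitrary
normalization `s` of `S`. -/
lemma zmod_relation (N : ℕ) [NeZero N] (h : ZMod N) (h2 : 2 * h = 1) (s : ℂ)
    (S T : Matrix (ZMod N) (ZMod N) ℂ)
    (hS : ∀ i j, S i j = s * ZMod.stdAddChar (i * j))
    (hT : ∀ i j, T i j = ZMod.stdAddChar (h * i ^ 2) * (if i + j = 0 then 1 else 0)) :
    (S * T) ^ 3 = (s * quadGauss N h) • S ^ 2 := by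
  have hM : ∀ i j, (S * T) i j = s * ZMod.stdAddChar (h * j ^ 2 - i * j) := by
    intro i j
    rw [Matrix.mul_apply, Finset.sum_eq_single (-j)]
    · rw [hS, hT, if_pos (by ring), mul_one, mul_assoc, ← AddChar.map_add_eq_mul]
      congr 2; ring
    · intro b _ hb
      rw [hT, if_neg (fun hc => hb (eq_neg_of_add_eq_zero_left hc))]; simp
    · simp
  have hM2 : ∀ i j, ((S * T) * (S * T)) i j =
      s ^ 2 * quadGauss N h * ZMod.stdAddChar (-(h * i ^ 2) - i * j) := by
    intro i j
    -- complete the square in the summation variable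
    rw [Matrix.mul_apply, ← quadGauss_shift h (-(i + j)), Finset.mul_sum, Finset.sum_mul]
    refine Finset.sum_congr rfl fun k _ => ?_
    rw [hM, hM, mul_assoc (s ^ 2), ← AddChar.map_add_eq_mul, mul_mul_mul_comm,
      ← AddChar.map_add_eq_mul, ← sq]
    congr 2
    linear_combination (k * (i + j) - i * j) * h2
  have hS2 : ∀ i j, (S * S) i j = s ^ 2 * (if i + j = 0 then (N : ℂ) else 0) := by
    intro i j
    rw [Matrix.mul_apply, ← sum_char, Finset.mul_sum]
    refine Finset.sum_congr rfl fun k _ => ?_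
    rw [hS, hS, mul_mul_mul_comm, ← AddChar.map_add_eq_mul, ← sq]
    congr 2; ring
  ext i j
  rw [pow_succ, pow_two, pow_two, Matrix.mul_apply, Matrix.smul_apply, hS2, smul_eq_mul]
  have : ∀ k, ((S * T) * (S * T)) i k * (S * T) k j =
      s ^ 3 * quadGauss N h * ZMod.stdAddChar (h * j ^ 2 - h * i ^ 2) *
        ZMod.stdAddChar (k * -(i + j)) := by
    intro k
    rw [hM2, hM, mul_assoc (s ^ 3 * quadGauss N h), ← AddChar.map_add_eq_mul, mul_mul_mul_comm,
      ← AddChar.map_add_eq_mul]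
    congr 1
    · ring
    · congr 1; ring
  simp_rw [this]
  rw [← Finset.mul_sum, sum_char]
  by_cases hij : i + j = 0
  · have : h * j ^ 2 - h * i ^ 2 = 0 := by linear_combination (h * (j - i)) * hij
    simp only [hij, this, neg_zero, if_true, AddChar.map_zero_eq_one]
    ring
  · simp only [neg_eq_zero, hij, if_false, mul_zero]

/-- For odd `N ≥ 3`, `m = (N-1)/2`, `ζ = exp(2πi/N)`, and `S`, `T`
the `N×N` matrices with entries `S i j = N^{-1/2} ζ^(ij)` and
`T i j = ζ^((m+1)i²) δ_N(i+j)`, one has `(ST)³ = φ_N • S²`, where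
`φ_N = ((m+1)/N)` (Legendre–Jacobi symbol) if `N ≡ 1 mod 4` and
`φ_N = ((m+1)/N)·i` if `N ≡ 3 mod 4`. -/
theorem stmt1 (N : ℕ) (hNodd : Odd N) (hN3 : 3 ≤ N)
    (m : ℕ) (hm : m = (N - 1) / 2)
    (ζ : ℂ) (hζ : ζ = Complex.exp (2 * Real.pi * Complex.I / N))
    (S T : Matrix (Fin N) (Fin N) ℂ)
    (hS : ∀ i j : Fin N, S i j = ((Real.sqrt N : ℂ))⁻¹ * ζ ^ (i.val * j.val))
    (hT : ∀ i j : Fin N, T i j =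
      ζ ^ ((m + 1) * i.val ^ 2) * (if (i.val + j.val) % N = 0 then 1 else 0))
    (φ : ℂ)
    (hφ : φ = if N % 4 = 1 then ((jacobiSym ((m : ℤ) + 1) N : ℤ) : ℂ)
              else ((jacobiSym ((m : ℤ) + 1) N : ℤ) : ℂ) * Complex.I) :
    (S * T) ^ 3 = φ • S ^ 2 := by
  have : NeZero N := ⟨by omega⟩
  have hm' : N = 2 * m + 1 := by obtain ⟨k, hk⟩ := hNodd; omega
  have hz : (2 * (m : ZMod N) + 1) = 0 := by
    have := ZMod.natCast_self N
    rw [show ((N : ℕ) : ZMod N) = ((2 * m + 1 : ℕ) : ZMod N) by rw [← hm']] at this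
    exact_mod_cast this
  have h2 : 2 * ((m + 1 : ℕ) : ZMod N) = 1 := by push_cast; linear_combination hz
  have hpow : ∀ k : ℕ, ζ ^ k = ZMod.stdAddChar (k : ZMod N) := by
    intro k
    have := ZMod.stdAddChar_coe (N := N) (k : ℤ)
    rw [Int.cast_natCast] at this
    rw [this, hζ, ← Complex.exp_nat_mul]
    congr 1; push_cast; ring
  have hsne : (Real.sqrt N : ℂ) ≠ 0 := by
    rw [Complex.ofReal_ne_zero, Real.sqrt_ne_zero (Nat.cast_nonneg N)]
    exact_mod_cast NeZero.ne N
  let f := finZModEquiv N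
  let F := Matrix.reindexAlgEquiv ℂ ℂ f
  have hval : ∀ x : ZMod N, (((f.symm x).val : ℕ) : ZMod N) = x := fun x => f.apply_symm_apply x
  have key := zmod_relation N ((m + 1 : ℕ) : ZMod N) h2 _ (F S) (F T)
    (by
      intro i j
      change S (f.symm i) (f.symm j) = _
      rw [hS, hpow]; push_cast; rw [hval, hval])
    (by
      intro i j
      change T (f.symm i) (f.symm j) = _
      have hc : ((f.symm i).val + (f.symm j).val) % N = 0 ↔ i + j = 0 := by
        rw [← Nat.dvd_iff_mod_eq_zero, ← ZMod.natCast_eq_zero_iff]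
        push_cast; rw [hval, hval]
      rw [hT, hpow]; simp only [hc]
      push_cast; rw [hval])
  rw [quadGauss_value N m hm', ← hφ, inv_mul_cancel_left₀ hsne] at key
  apply F.injective
  simpa only [map_pow, map_mul, map_smul] using key
end

section
/- Let N ≥ 3 be an odd integer, m = (N−1)/2, ζ = exp(2πi/N), and let S, T be the N×N matrices with entries S_i^j = N^{−1/2} ζ^{ij} and T_i^j = ζ^{(m+1)i²} δ_N(i+j). Then S is invertible and (S^{−1}T)³ = (TS^{−1})³ = φ_N I_N, where φ_N = ((m+1)/N) if N ≡ 1 mod 4 and φ_N = ((m+1)/N)·i if N ≡ 3 mod 4. -/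
/-!
Write `e(x) = ζ ^ x` for `x` modulo `N` and `h = m + 1`, the inverse of `2` modulo `N`. Since
`S` is a normalised discrete Fourier matrix, `A = S⁻¹T` has entries `N^{-1/2} e(ik + hk²)`.
Completing the square gives `(A²)_{ik} = N⁻¹ G e(-hi² - ik)` with `G = ∑ₓ e(hx²)`, and
orthogonality of characters then gives `A³ = N^{-1/2} G · 1` (`cube_eq_smul_one`); the cube of
`TS⁻¹` follows by conjugating with `S`. What remains is `G = φ √N` for every odd `N`, prime or not.

This is Gauss's evaluation through `q`-binomial coefficients. The alternating sum of the
coefficients `[2m, k]_q` is `∏_{j < m} (1 - q^{2j+1})` (`altSum_eq_prod`). At `q = ζ⁻¹` the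
coefficient `[N - 1, k]_q` equals `(-1)^k ζ^{k(k+1)/2}`, so that `∑_k ζ^{k(k+1)/2}` is that product
(`sum_triangular`), while completing the square identifies the sum with `e(-h³) G`. Each factor
`1 - exp(-iθ)` is `2i sin(θ/2) exp(-iθ/2)` with `0 < θ/2 < π`, so the product shows that `G` is a
positive multiple of `(-i)^m`; together with `|G|² = N` this yields `G = (-i)^m √N`
(`quadSum_eq`). Finally `((m+1)/N) = (2/N)` depends only on `N` modulo `8`, whence
`φ = (-i)^m` (`jacobi_phase`).
-/

/-! ### Gaussian binomial coefficients -/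

/-- The Gaussian (`q`-)binomial coefficient `[n, k]_q`, defined by its Pascal recursion so that it
makes sense when `q` is a root of unity; it vanishes for `k > n`. -/
def qChoose (q : ℂ) : ℕ → ℕ → ℂ
  | _, 0 => 1
  | 0, _ + 1 => 0
  | n + 1, k + 1 => qChoose q n k + q ^ (k + 1) * qChoose q n (k + 1)

theorem qChoose_zero (q : ℂ) (n : ℕ) : qChoose q n 0 = 1 := by cases n <;> rfl

theorem qChoose_succ (q : ℂ) (n k : ℕ) : qChoose q (n + 1) (k + 1) =
    qChoose q n k + q ^ (k + 1) * qChoose q n (k + 1) := rfl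

theorem qChoose_of_lt (q : ℂ) {n k : ℕ} (h : n < k) : qChoose q n k = 0 := by
  induction n generalizing k with
  | zero => obtain ⟨k, rfl⟩ := Nat.exists_eq_succ_of_ne_zero h.ne'; rfl
  | succ n ih =>
    obtain ⟨k, rfl⟩ := Nat.exists_eq_succ_of_ne_zero (Nat.ne_zero_of_lt h)
    rw [Nat.succ_eq_add_one, qChoose_succ, ih (by omega), ih (by omega)]; ring

/-- The absorption identity `(1 - q^{k+1}) [n+1, k+1] = (1 - q^{n+1}) [n, k]`. -/
theorem qChoose_absorb (q : ℂ) (n k : ℕ) :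
    (1 - q ^ (k + 1)) * qChoose q (n + 1) (k + 1) = (1 - q ^ (n + 1)) * qChoose q n k := by
  induction n generalizing k with
  | zero =>
    rcases k with _ | k
    · simp [qChoose]
    · simp [qChoose]
  | succ n ih =>
    rcases k with _ | k
    · have := ih 0
      rw [qChoose_zero] at this
      rw [qChoose_succ, qChoose_zero]
      linear_combination q * this
    · have h1 := ih (k + 1)
      have h2 := ih k
      have h3 := qChoose_succ q n k
      rw [qChoose_succ q (n + 1) (k + 1)]
      linear_combination q ^ (k + 1 + 1) * h1 + q * h2 - q * (1 - q ^ (n + 1)) * h3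

/-- By Pascal's rule the alternating sum for `n + 2` is `∑ (-1)^{k+1} (1 - q^k) [n+1, k]`, to
which absorption applies. -/
theorem altSum_step (q : ℂ) (n : ℕ) :
    ∑ k ∈ Finset.range (n + 3), (-1) ^ k * qChoose q (n + 2) k =
      (1 - q ^ (n + 1)) * ∑ k ∈ Finset.range (n + 1), (-1) ^ k * qChoose q n k := by
  have h1 : ∑ k ∈ Finset.range (n + 2), (-1) ^ (k + 1) * (q ^ (k + 1) * qChoose q (n + 1) (k + 1))
      = ∑ k ∈ Finset.range (n + 2), (-1) ^ k * (q ^ k * qChoose q (n + 1) k) - 1 := by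
    have h := Finset.sum_range_succ' (fun k => (-1) ^ k * (q ^ k * qChoose q (n + 1) k)) (n + 2)
    rw [Finset.sum_range_succ, qChoose_of_lt q (by omega : n + 1 < n + 2)] at h
    simp only [qChoose_zero, pow_zero] at h
    linear_combination -h
  rw [Finset.sum_range_succ', qChoose_zero]
  simp only [qChoose_succ q (n + 1), mul_add, Finset.sum_add_distrib]
  rw [h1]
  have h2 : ∀ k, (-1 : ℂ) ^ (k + 1) * qChoose q (n + 1) k + (-1) ^ k * (q ^ k * qChoose q (n + 1) k)
      = - ((-1) ^ k * ((1 - q ^ k) * qChoose q (n + 1) k)) := fun k => by ring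
  have h3 : ∑ k ∈ Finset.range (n + 2), (-1 : ℂ) ^ k * ((1 - q ^ k) * qChoose q (n + 1) k) =
      -((1 - q ^ (n + 1)) * ∑ k ∈ Finset.range (n + 1), (-1) ^ k * qChoose q n k) := by
    rw [Finset.sum_range_succ', Finset.mul_sum, ← Finset.sum_neg_distrib]
    simp only [qChoose_absorb, pow_zero, sub_self, zero_mul, mul_zero, add_zero]
    exact Finset.sum_congr rfl fun k _ => by ring
  have h4 := Finset.sum_congr (rfl : Finset.range (n + 2) = _) fun k _ => h2 k
  rw [Finset.sum_add_distrib, Finset.sum_neg_distrib, h3] at h4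
  linear_combination h4

/-- Gauss's product formula for the alternating sum of Gaussian binomial coefficients. -/
theorem altSum_eq_prod (q : ℂ) (m : ℕ) :
    ∑ k ∈ Finset.range (2 * m + 1), (-1) ^ k * qChoose q (2 * m) k =
      ∏ j ∈ Finset.range m, (1 - q ^ (2 * j + 1)) := by
  induction m with
  | zero => simp [qChoose]
  | succ m ih => rw [Finset.prod_range_succ, ← ih, mul_comm _ (1 - _)]; exact altSum_step q (2 * m)

/-! ### The Gauss sum as a product -/

/-- Gauss's product formula at `q = ζ⁻¹`, a primitive root of unity of order `2m + 1`. -/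
theorem sum_triangular (ζ : ℂ) (m : ℕ) (hζ : IsPrimitiveRoot ζ (2 * m + 1)) :
    ∑ k ∈ Finset.range (2 * m + 1), ζ ^ (k * (k + 1) / 2) =
      ∏ j ∈ Finset.range m, (1 - (ζ⁻¹) ^ (2 * j + 1)) := by
  have h0 : ζ ≠ 0 := hζ.ne_zero (by omega)
  have key : ∀ k < 2 * m + 1, qChoose ζ⁻¹ (2 * m) k = (-1) ^ k * ζ ^ (k * (k + 1) / 2) := by
    intro k
    induction k with
    | zero => simp [qChoose_zero]
    | succ k ih =>
      intro hk
      have h1 := qChoose_absorb ζ⁻¹ (2 * m) k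
      -- `[N, k + 1]_q = 0` for `0 < k + 1 < N`, so Pascal's rule relates `[N - 1, k + 1]_q` to
      -- `[N - 1, k]_q`.
      rw [hζ.inv.pow_eq_one, sub_self, zero_mul, mul_eq_zero, sub_eq_zero] at h1
      have h2 := h1.resolve_left (hζ.inv.pow_ne_one_of_pos_of_lt (by omega) hk).symm
      rw [qChoose_succ, ih (by omega)] at h2
      have h3 : (k + 1) * (k + 1 + 1) / 2 = k * (k + 1) / 2 + (k + 1) := by
        rw [show (k + 1) * (k + 1 + 1) = k * (k + 1) + (k + 1) * 2 by ring]
        exact Nat.add_mul_div_right _ _ two_pos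
      have h4 : ζ ^ (k + 1) * (ζ⁻¹) ^ (k + 1) = 1 := by
        rw [← mul_pow, mul_inv_cancel₀ h0, one_pow]
      rw [h3, pow_add]
      linear_combination ζ ^ (k + 1) * h2 - qChoose ζ⁻¹ (2 * m) (k + 1) * h4
  rw [← altSum_eq_prod]
  refine Finset.sum_congr rfl fun k hk => ?_
  rw [key k (Finset.mem_range.mp hk), ← mul_assoc, ← mul_pow]
  simp

/-- Polar form of the product, from `1 - exp(-2iθ) = 2i sin θ exp(-iθ)` and
`∑_{j < M} (2j + 1) = M²`. -/
theorem prod_polar (N M : ℕ) : ∏ j ∈ Finset.range M,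
      (1 - (Complex.exp (2 * Real.pi * Complex.I / N))⁻¹ ^ (2 * j + 1)) =
    Complex.I ^ M * Complex.exp (-(Real.pi * Complex.I * M ^ 2 / N)) *
      ((∏ j ∈ Finset.range M, 2 * Real.sin (Real.pi * (2 * j + 1) / N) : ℝ) : ℂ) := by
  induction M with
  | zero => simp
  | succ M ih =>
    rw [Finset.prod_range_succ, Finset.prod_range_succ, ih]
    set θ : ℂ := Real.pi * (2 * M + 1) / N with hθ
    have h1 : (Complex.exp (2 * Real.pi * Complex.I / N))⁻¹ ^ (2 * M + 1) =
        Complex.exp (-θ * Complex.I) * Complex.exp (-θ * Complex.I) := by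
      rw [← Complex.exp_neg, ← Complex.exp_nat_mul, ← Complex.exp_add]
      congr 1
      rw [hθ]; push_cast; ring
    have h2 : Complex.exp (-(Real.pi * Complex.I * (M + 1 : ℕ) ^ 2 / N)) =
        Complex.exp (-(Real.pi * Complex.I * M ^ 2 / N)) * Complex.exp (-θ * Complex.I) := by
      rw [← Complex.exp_add]
      congr 1
      rw [hθ]; push_cast; ring
    have h3 : Complex.exp (θ * Complex.I) * Complex.exp (-θ * Complex.I) = 1 := by
      rw [← Complex.exp_add]; simp
    rw [h1, h2]
    push_cast
    rw [← hθ, Complex.sin]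
    linear_combination (Complex.I ^ M * Complex.exp (-(Real.pi * Complex.I * M ^ 2 / N)) *
      ∏ j ∈ Finset.range M, (2 * Complex.sin (Real.pi * (2 * j + 1) / N))) *
      (-h3 + (Complex.exp (-θ * Complex.I) * (Complex.exp (θ * Complex.I) -
        Complex.exp (-θ * Complex.I))) * Complex.I_sq)

/-! ### The phase -/

/-- The scalar `φ_N` of the theorem equals `(-i)^m`. -/
theorem jacobi_phase (m : ℕ) :
    (if (2 * m + 1) % 4 = 1 then ((jacobiSym ((m : ℤ) + 1) (2 * m + 1) : ℤ) : ℂ)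
      else ((jacobiSym ((m : ℤ) + 1) (2 * m + 1) : ℤ) : ℂ) * Complex.I) = (-Complex.I) ^ m := by
  have hodd : Odd (2 * m + 1) := ⟨m, rfl⟩
  have h1 : jacobiSym ((m : ℤ) + 1) (2 * m + 1) * jacobiSym 2 (2 * m + 1) = 1 := by
    rw [← jacobiSym.mul_left, jacobiSym.mod_left]
    rw [show ((m : ℤ) + 1) * 2 = 1 + ((2 * m + 1 : ℕ) : ℤ) by push_cast; ring, Int.add_emod_right,
      ← jacobiSym.mod_left, jacobiSym.one_left]
  rw [jacobiSym.at_two hodd, ZMod.χ₈_nat_eq_if_mod_eight] at h1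
  have e4 : (-Complex.I) ^ 4 = 1 := by rw [neg_pow, Complex.I_pow_four]; norm_num
  rw [← Nat.div_add_mod m 4, pow_add, pow_mul, e4, one_pow, one_mul, Nat.div_add_mod m 4]
  have hm : m % 4 < 4 := Nat.mod_lt _ (by norm_num)
  generalize hJ : jacobiSym ((m : ℤ) + 1) (2 * m + 1) = J at *
  interval_cases h : m % 4
  · rw [if_neg (by omega), if_pos (by omega)] at h1
    rw [if_pos (by omega), (by linarith : J = 1)]; simp
  · rw [if_neg (by omega), if_neg (by omega)] at h1
    rw [if_neg (by omega), (by linarith : J = -1)]; simp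
  · rw [if_neg (by omega), if_neg (by omega)] at h1
    rw [if_pos (by omega), (by linarith : J = -1)]; simp
  · rw [if_neg (by omega), if_pos (by omega)] at h1
    rw [if_neg (by omega), (by linarith : J = 1), pow_succ, neg_sq, Complex.I_sq]; simp

/-! ### Evaluation of the quadratic Gauss sum -/

theorem stdAddChar_natCast (N : ℕ) [NeZero N] (k : ℕ) :
    ZMod.stdAddChar (k : ZMod N) = Complex.exp (2 * Real.pi * Complex.I / N) ^ k := by
  have h := ZMod.stdAddChar_coe (N := N) (k : ℤ)
  rw [Int.cast_natCast] at h
  rw [h, ← Complex.exp_nat_mul]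
  congr 1
  push_cast; ring

theorem bijective_fin_cast (N : ℕ) [NeZero N] :
    Function.Bijective fun i : Fin N => ((i.val : ℕ) : ZMod N) := by
  refine (Fintype.bijective_iff_injective_and_card _).2 ⟨fun i j h => ?_, by simp [ZMod.card]⟩
  have h' := (ZMod.natCast_eq_natCast_iff' _ _ _).1 h
  rwa [Nat.mod_eq_of_lt i.2, Nat.mod_eq_of_lt j.2, ← Fin.ext_iff] at h'

theorem sum_fin_cast (N : ℕ) [NeZero N] (f : ZMod N → ℂ) :
    ∑ i : Fin N, f ((i.val : ℕ) : ZMod N) = ∑ x, f x :=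
  (bijective_fin_cast N).sum_comp f

theorem sum_stdAddChar (N : ℕ) [NeZero N] (a : ZMod N) :
    ∑ x : ZMod N, ZMod.stdAddChar (x * a) = if a = 0 then (N : ℂ) else 0 := by
  rw [AddChar.sum_mulShift a (ZMod.isPrimitive_stdAddChar N), ZMod.card]
  split_ifs <;> simp

/-- The quadratic Gauss sum `∑ₓ exp(2πi h x² / N)` over `x` modulo `N`. -/
noncomputable def quadSum (N : ℕ) [NeZero N] (h : ZMod N) : ℂ :=
  ∑ x : ZMod N, ZMod.stdAddChar (h * x ^ 2)

/-- Substituting `x = y + d` in `G · conj G = ∑ e(h(x² - y²))` leaves `∑_d e(hd²) ∑_y e(yd) = N`. -/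
theorem norm_quadSum (N : ℕ) [NeZero N] (h : ZMod N) (hh : 2 * h = 1) :
    ‖quadSum N h‖ = Real.sqrt N := by
  have key : quadSum N h * (starRingEnd ℂ) (quadSum N h) = N := by
    have h1 : ∀ y : ZMod N, (∑ x : ZMod N, (ZMod.stdAddChar (h * x ^ 2) : ℂ)) *
        ZMod.stdAddChar (-(h * y ^ 2)) =
        ∑ d : ZMod N, (ZMod.stdAddChar (h * d ^ 2) : ℂ) * ZMod.stdAddChar (y * d) := by
      intro y
      rw [← Equiv.sum_comp (Equiv.addRight y), Finset.sum_mul]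
      refine Finset.sum_congr rfl fun d _ => ?_
      rw [← AddChar.map_add_eq_mul, ← AddChar.map_add_eq_mul]
      congr 1
      simp only [Equiv.coe_addRight]
      linear_combination (y * d) * hh
    unfold quadSum
    rw [map_sum, Finset.mul_sum]
    simp only [← AddChar.map_neg_eq_conj, h1]
    rw [Finset.sum_comm]
    simp only [← Finset.mul_sum, sum_stdAddChar]
    simp
  rw [Complex.mul_conj, Complex.normSq_eq_norm_sq] at key
  have : ‖quadSum N h‖ ^ 2 = N := by exact_mod_cast key
  rw [← this, Real.sqrt_sq (norm_nonneg _)]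

theorem two_mul_half (N m : ℕ) (hN : N = 2 * m + 1) (h : ZMod N) (hh : h = (m + 1 : ℕ)) :
    2 * h = 1 := by
  have := ZMod.natCast_self N
  conv at this => lhs; arg 1; rw [hN]
  rw [hh]
  push_cast at this ⊢
  linear_combination this

/-- As `2h = 1`, completing the square gives `k(k+1)/2 = h(k + h)² - h³` modulo `N`. -/
theorem quadSum_eq_mul_triangular (m : ℕ) (h : ZMod (2 * m + 1)) (hh : h = (m + 1 : ℕ)) :
    quadSum (2 * m + 1) h = ZMod.stdAddChar (h ^ 3) * ∑ k ∈ Finset.range (2 * m + 1),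
      Complex.exp (2 * Real.pi * Complex.I / (2 * m + 1 : ℕ)) ^ (k * (k + 1) / 2) := by
  have h2 := two_mul_half (2 * m + 1) m rfl h hh
  rw [Finset.sum_range, quadSum, ← Equiv.sum_comp (Equiv.addRight h), ← sum_fin_cast,
    Finset.mul_sum]
  refine Finset.sum_congr rfl fun k _ => ?_
  rw [← stdAddChar_natCast, ← AddChar.map_add_eq_mul]
  congr 1
  obtain ⟨t, ht⟩ := (Nat.even_mul_succ_self k.val).two_dvd
  rw [ht, Nat.mul_div_cancel_left _ two_pos]
  have ht' := congrArg (Nat.cast : ℕ → ZMod (2 * m + 1)) ht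
  push_cast at ht'
  simp only [Equiv.coe_addRight]
  linear_combination h * ht' + (h * (k.val : ZMod (2 * m + 1)) + t) * h2

/-- The sign of the quadratic Gauss sum, for `h = 1/2` modulo `N = 2m + 1`. -/
theorem quadSum_eq (m : ℕ) (h : ZMod (2 * m + 1)) (hh : h = (m + 1 : ℕ)) :
    quadSum (2 * m + 1) h = (-Complex.I) ^ m * (Real.sqrt (2 * m + 1 : ℕ) : ℂ) := by
  have h2 := two_mul_half (2 * m + 1) m rfl h hh
  have hN0 : ((2 * m + 1 : ℕ) : ℂ) ≠ 0 := Nat.cast_ne_zero.2 (by omega)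
  set r : ℝ := ∏ j ∈ Finset.range m, 2 * Real.sin (Real.pi * (2 * j + 1) / (2 * m + 1 : ℕ)) with hr
  have hr0 : 0 < r := by
    refine Finset.prod_pos fun j hj => mul_pos two_pos (Real.sin_pos_of_pos_of_lt_pi ?_ ?_)
    · have := Real.pi_pos; positivity
    · have hj' : (j : ℝ) < m := by exact_mod_cast Finset.mem_range.1 hj
      rw [div_lt_iff₀ (by positivity)]
      push_cast
      exact mul_lt_mul_of_pos_left (by linarith) Real.pi_pos
  have hG : quadSum (2 * m + 1) h = (-Complex.I) ^ m * (r : ℂ) := by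
    rw [quadSum_eq_mul_triangular m h hh,
      sum_triangular _ m (Complex.isPrimitiveRoot_exp (2 * m + 1) (by omega)), prod_polar, ← hr]
    have he : (ZMod.stdAddChar (h ^ 3) : ℂ) *
        Complex.exp (-(Real.pi * Complex.I * m ^ 2 / (2 * m + 1 : ℕ))) = (-1) ^ m := by
      rw [hh, ← Nat.cast_pow, stdAddChar_natCast, ← Complex.exp_nat_mul, ← Complex.exp_add]
      -- `2(m+1)³ - m² = (2m+1)(m² + 2m + 2)`
      have e1 : (((m + 1) ^ 3 : ℕ) : ℂ) * (2 * Real.pi * Complex.I / (2 * m + 1 : ℕ)) +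
          -(Real.pi * Complex.I * m ^ 2 / (2 * m + 1 : ℕ)) =
          ((m ^ 2 + 2 * m + 2 : ℕ) : ℂ) * (Real.pi * Complex.I) := by
        field_simp
        push_cast; ring
      rw [e1, Complex.exp_nat_mul, Complex.exp_pi_mul_I,
        show m ^ 2 + 2 * m + 2 = m * (m + 1) + m + 2 by ring, pow_add, pow_add,
        (Nat.even_mul_succ_self m).neg_one_pow]
      ring
    rw [neg_pow, ← he]
    ring
  have hn := norm_quadSum (2 * m + 1) h h2
  rw [hG, norm_mul, norm_pow, norm_neg, Complex.norm_I, one_pow, one_mul, Complex.norm_real,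
    Real.norm_of_nonneg hr0.le] at hn
  rw [hG, hn]

/-! ### The matrix identity -/

/-- The matrix relation, with the entries of `S` and `T` written through the standard additive
character of `ZMod N`, for any `φ` with `G = φ √N`. -/
theorem cube_eq_smul_one (N : ℕ) [NeZero N] (h : ZMod N) (h2 : 2 * h = 1) (φ : ℂ)
    (hG : quadSum N h = φ * (Real.sqrt N : ℂ)) (S T : Matrix (Fin N) (Fin N) ℂ)
    (hS : ∀ i j : Fin N, S i j = ((Real.sqrt N : ℂ))⁻¹ *
      ZMod.stdAddChar ((i.val : ZMod N) * (j.val : ZMod N)))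
    (hT : ∀ i j : Fin N, T i j = if (i.val : ZMod N) = -(j.val : ZMod N) then
      (ZMod.stdAddChar (h * (i.val : ZMod N) ^ 2) : ℂ) else 0) :
    IsUnit S ∧ (S⁻¹ * T) ^ 3 = φ • (1 : Matrix (Fin N) (Fin N) ℂ)
      ∧ (T * S⁻¹) ^ 3 = φ • (1 : Matrix (Fin N) (Fin N) ℂ) := by
  set s : ℂ := (Real.sqrt N : ℂ) with hs
  have hN0 : (N : ℂ) ≠ 0 := Nat.cast_ne_zero.2 (NeZero.ne N)
  have hss : s * s = N := by
    rw [hs, ← Complex.ofReal_mul, Real.mul_self_sqrt (Nat.cast_nonneg _), Complex.ofReal_natCast]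
  have hs0 : s ≠ 0 := fun h0 => hN0 (by rw [← hss, h0, zero_mul])
  have hcc : s⁻¹ * s⁻¹ * N = 1 := by rw [← hss]; field_simp
  -- `c i` is the residue class of the index `i`
  let c : Fin N → ZMod N := fun i => ((i.val : ℕ) : ZMod N)
  have hc : ∀ i j, c i = c j ↔ i = j := fun i j => (bijective_fin_cast N).1.eq_iff
  have hsum : ∀ f : ZMod N → ℂ, ∑ i, f (c i) = ∑ x, f x := sum_fin_cast N
  have hS' : ∀ i j, S i j = s⁻¹ * ZMod.stdAddChar (c i * c j) := hS
  have hT' : ∀ i j, T i j = if c i = -c j then ZMod.stdAddChar (h * c i ^ 2) else 0 := hT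
  let R : Matrix (Fin N) (Fin N) ℂ := fun i j => s⁻¹ * ZMod.stdAddChar (-(c i * c j))
  have hSR : S * R = 1 := by
    ext i k
    rw [Matrix.mul_apply, Matrix.one_apply]
    have : ∀ j, S i j * R j k = s⁻¹ * s⁻¹ * ZMod.stdAddChar (c j * (c i - c k)) := fun j => by
      rw [hS', mul_mul_mul_comm, ← AddChar.map_add_eq_mul]
      congr 2; ring
    simp only [this]
    rw [← Finset.mul_sum, hsum fun x => ZMod.stdAddChar (x * (c i - c k)), sum_stdAddChar]
    simp only [sub_eq_zero, hc]
    split_ifs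
    · exact hcc
    · simp
  have hu : IsUnit S := IsUnit.of_mul_eq_one R hSR
  have hinv : S⁻¹ = R := Matrix.inv_eq_right_inv hSR
  have hA : ∀ i k, (R * T) i k = s⁻¹ * ZMod.stdAddChar (c i * c k + h * c k ^ 2) := by
    intro i k
    rw [Matrix.mul_apply]
    simp only [hT']
    rw [hsum fun x => s⁻¹ * ZMod.stdAddChar (-(c i * x)) *
      if x = -c k then ZMod.stdAddChar (h * x ^ 2) else 0]
    simp only [mul_ite, mul_zero, Finset.sum_ite_eq', Finset.mem_univ, if_true]
    rw [mul_assoc, ← AddChar.map_add_eq_mul]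
    congr 2; ring
  have hA2 : ∀ i k, ((R * T) * (R * T)) i k =
      s⁻¹ * s⁻¹ * ZMod.stdAddChar (-(h * c i ^ 2) - c i * c k) * quadSum N h := by
    intro i k
    rw [Matrix.mul_apply]
    simp only [hA]
    rw [hsum fun x => s⁻¹ * ZMod.stdAddChar (c i * x + h * x ^ 2) *
      (s⁻¹ * ZMod.stdAddChar (x * c k + h * c k ^ 2)), quadSum, Finset.mul_sum,
      ← Equiv.sum_comp (Equiv.addRight (c i + c k))
        fun x : ZMod N => s⁻¹ * s⁻¹ * ZMod.stdAddChar (-(h * c i ^ 2) - c i * c k) *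
          (ZMod.stdAddChar (h * x ^ 2) : ℂ)]
    refine Finset.sum_congr rfl fun x _ => ?_
    rw [mul_mul_mul_comm, ← AddChar.map_add_eq_mul, mul_assoc (s⁻¹ * s⁻¹),
      ← AddChar.map_add_eq_mul]
    congr 2
    simp only [Equiv.coe_addRight]
    linear_combination (-(x * (c i + c k)) - c i * c k) * h2
  have hA3 : (R * T) ^ 3 = φ • (1 : Matrix (Fin N) (Fin N) ℂ) := by
    ext i k
    rw [pow_succ, pow_two, Matrix.mul_apply, Matrix.smul_apply, Matrix.one_apply]
    have : ∀ j, ((R * T) * (R * T)) i j * (R * T) j k = (s⁻¹ * s⁻¹) * φ *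
        ZMod.stdAddChar (-(h * c i ^ 2) + h * c k ^ 2) *
        ZMod.stdAddChar (c j * (c k - c i)) := fun j => by
      rw [hA2, hA, hG]
      have e : (ZMod.stdAddChar (-(h * c i ^ 2) - c i * c j) : ℂ) *
          ZMod.stdAddChar (c j * c k + h * c k ^ 2) =
          ZMod.stdAddChar (-(h * c i ^ 2) + h * c k ^ 2) *
          ZMod.stdAddChar (c j * (c k - c i)) := by
        rw [← AddChar.map_add_eq_mul, ← AddChar.map_add_eq_mul]
        congr 1; ring
      rw [mul_assoc _ _ (ZMod.stdAddChar (c j * (c k - c i)) : ℂ), ← e]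
      field_simp
    simp only [this]
    rw [← Finset.mul_sum, hsum fun x => ZMod.stdAddChar (x * (c k - c i)), sum_stdAddChar]
    simp only [sub_eq_zero, hc, eq_comm (a := k)]
    split_ifs with hik
    · subst hik
      rw [neg_add_cancel, AddChar.map_zero_eq_one, smul_eq_mul]
      linear_combination φ * hcc
    · simp
  refine ⟨hu, by rw [hinv, hA3], ?_⟩
  calc (T * S⁻¹) ^ 3 = S * (R * T) ^ 3 * R := by
        rw [hinv]
        simp only [pow_succ, pow_zero, one_mul, ← mul_assoc, hSR]
    _ = φ • 1 := by rw [hA3, mul_smul_comm, mul_one, smul_mul_assoc, hSR]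

/-- With `N`, `m`, `ζ`, `S`, `T`, `φ_N` as in the context, `S` is
invertible and `(S⁻¹T)³ = (TS⁻¹)³ = φ_N · I_N`. -/
theorem stmt2 (N : ℕ) (hNodd : Odd N) (hN3 : 3 ≤ N)
    (m : ℕ) (hm : m = (N - 1) / 2)
    (ζ : ℂ) (hζ : ζ = Complex.exp (2 * Real.pi * Complex.I / N))
    (S T : Matrix (Fin N) (Fin N) ℂ)
    (hS : ∀ i j : Fin N, S i j = ((Real.sqrt N : ℂ))⁻¹ * ζ ^ (i.val * j.val))
    (hT : ∀ i j : Fin N, T i j =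
      ζ ^ ((m + 1) * i.val ^ 2) * (if (i.val + j.val) % N = 0 then 1 else 0))
    (φ : ℂ)
    (hφ : φ = if N % 4 = 1 then ((jacobiSym ((m : ℤ) + 1) N : ℤ) : ℂ)
              else ((jacobiSym ((m : ℤ) + 1) N : ℤ) : ℂ) * Complex.I) :
    IsUnit S ∧ (S⁻¹ * T) ^ 3 = φ • (1 : Matrix (Fin N) (Fin N) ℂ)
      ∧ (T * S⁻¹) ^ 3 = φ • (1 : Matrix (Fin N) (Fin N) ℂ) := by
  have hN : N = 2 * m + 1 := by obtain ⟨t, rfl⟩ := hNodd; omega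
  have : NeZero N := ⟨by omega⟩
  have hpow : ∀ k : ℕ, ζ ^ k = ZMod.stdAddChar (k : ZMod N) := fun k => by
    rw [hζ, stdAddChar_natCast]
  have hG : quadSum N ((m + 1 : ℕ) : ZMod N) = φ * (Real.sqrt N : ℂ) := by
    clear hS hT hpow S T hζ hm
    subst hN
    rw [hφ, jacobi_phase]
    exact quadSum_eq m _ rfl
  refine cube_eq_smul_one N ((m + 1 : ℕ) : ZMod N) (two_mul_half N m hN _ rfl) φ hG S T
    (fun i j => by rw [hS, hpow, Nat.cast_mul]) fun i j => ?_
  have hij : (i.val + j.val) % N = 0 ↔ (i.val : ZMod N) = -(j.val : ZMod N) := by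
    rw [← Nat.dvd_iff_mod_eq_zero, ← ZMod.natCast_eq_zero_iff, Nat.cast_add,
      add_eq_zero_iff_eq_neg]
  rw [hT, hpow, mul_ite, mul_one, mul_zero, Nat.cast_mul, Nat.cast_pow]
  simp only [hij]
end

section
/- Let N ≥ 3 be an odd integer, m = (N−1)/2, ζ = exp(2πi/N), and let S, T be the N×N matrices with entries S_i^j = N^{−1/2} ζ^{ij} and T_i^j = ζ^{(m+1)i²} δ_N(i+j). Then T is invertible and the matrix 𝒬_N := T^{−1}S satisfies 𝒬_N³ = φ_N^{−1} I_N, where φ_N = ((m+1)/N) if N ≡ 1 mod 4 and φ_N = ((m+1)/N)·i if N ≡ 3 mod 4; in particular 𝒬_N is projectively of order 3. -/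
/-!
Write `N = 2m + 1`, `h = m + 1` (the inverse of `2` mod `N`) and `ψ x = ζ ^ x` for the standard
additive character of `ZMod N`. Since `T` is a diagonal matrix times the permutation `i ↦ -i`,
`Q = T⁻¹ S` has entries `N ^ (-1/2) * ψ (-h i² - i j)`.

* `Q` is unitary by orthogonality of characters (`qMat_unitary`), and completing the square gives
  `Q² = c • Qᴴ`, where `c = N ^ (-1/2) * G` and `G = ∑ k, ψ (-h k²)` (`qMat_sq`). Hence `Q³ = c • 1`,
  and unitarity forces `|c| = 1`. So only the argument of the quadratic Gauss sum `G` is needed.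
* The argument is found by Gauss's method, which works for every odd `N`, prime or not. The identity
  `∑ k ≤ 2m, (-1) ^ k [2m, k]_q = ∏ t < m, (1 - q ^ (2t + 1))` for `q`-binomial coefficients
  (`alternating_sum`), taken at `q = ζ`, has `ψ (-h (k² + k))` as its `k`-th term because
  `[2m, k + 1] = -ζ ^ (-(k + 1)) [2m, k]` there (`qBinom_root`, `gauss_prod`). Each factor on the
  right is `-2i * exp (π i j / N) * sin (π j / N)` with `0 < j < N`, so the product is a positive
  number times an explicit root of unity (`odd_prod`). The result is that `G` is a positive
  multiple of `i ^ m` (`gauss_arg`).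

Therefore `Q³ = i ^ m • 1`. Finally `(h / N) = (2 / N)` depends only on `N` mod `8`, and the four
cases give `φ⁻¹ = i ^ m` (`phi_eq`).
-/

/-! ### `q`-binomial coefficients -/

/-- The `q`-binomial coefficient `[n, k]_q`, defined by the `q`-Pascal recursion so that it makes
sense for every `q` in a commutative ring, roots of unity included. -/
def qBinom {R : Type*} [CommRing R] (q : R) : ℕ → ℕ → R
  | _, 0 => 1
  | 0, _ + 1 => 0
  | n + 1, k + 1 => qBinom q n k + q ^ (k + 1) * qBinom q n (k + 1)

theorem qBinom_zero_right {R : Type*} [CommRing R] (q : R) (n : ℕ) : qBinom q n 0 = 1 := by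
  cases n <;> rfl

theorem qBinom_eq_zero {R : Type*} [CommRing R] (q : R) (n k : ℕ) (h : n < k) :
    qBinom q n k = 0 := by
  induction n generalizing k with
  | zero => obtain ⟨k, rfl⟩ := Nat.exists_eq_succ_of_ne_zero (by omega : k ≠ 0); rfl
  | succ n ih =>
    obtain ⟨k, rfl⟩ := Nat.exists_eq_succ_of_ne_zero (by omega : k ≠ 0)
    simp [qBinom, ih k (by omega), ih (k + 1) (by omega)]

/-- `(1 - q ^ (k + 1)) [n, k + 1] = (1 - q ^ (n - k)) [n, k]` for `k ≤ n`, with `d = n - k`. -/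
theorem qBinom_ratio {R : Type*} [CommRing R] (q : R) (n k d : ℕ) (h : n = k + d) :
    (1 - q ^ (k + 1)) * qBinom q n (k + 1) = (1 - q ^ d) * qBinom q n k := by
  induction n generalizing k d with
  | zero =>
    obtain ⟨rfl, rfl⟩ : k = 0 ∧ d = 0 := by omega
    simp [qBinom]
  | succ n ih =>
    have key : ∀ k d, n = k + d →
        (1 - q ^ (k + 1)) * qBinom q (n + 1) (k + 1) = (1 - q ^ (n + 1)) * qBinom q n k := by
      intro k d h
      have := ih k d h
      subst h
      simp only [qBinom]
      linear_combination q ^ (k + 1) * this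
    cases k with
    | zero =>
      obtain rfl : d = n + 1 := by omega
      simpa [qBinom_zero_right] using key 0 n (by omega)
    | succ j =>
      cases d with
      | zero => simp [qBinom_eq_zero q (n + 1) (j + 1 + 1) (by omega)]
      | succ d =>
        have h1 := ih j (d + 1) (by omega)
        rw [key (j + 1) d (by omega)]
        simp only [qBinom]
        obtain rfl : n = j + (d + 1) := by omega
        linear_combination h1

theorem qBinom_absorb {R : Type*} [CommRing R] (q : R) (n k : ℕ) (h : k ≤ n) :
    (1 - q ^ (k + 1)) * qBinom q (n + 1) (k + 1) = (1 - q ^ (n + 1)) * qBinom q n k := by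
  obtain ⟨d, rfl⟩ := Nat.exists_eq_add_of_le h
  have := qBinom_ratio q (k + d) k d rfl
  simp only [qBinom]
  linear_combination q ^ (k + 1) * this

/-- The alternating sums `f n = ∑ k ≤ n, (-1) ^ k [n, k]` satisfy
`f (n + 2) = (1 - q ^ (n + 1)) f n`: expanding by the Pascal recursion leaves
`∑ k, (-1) ^ k (1 - q ^ (k + 1)) [n + 1, k + 1]`, to which `qBinom_absorb` applies. -/
theorem alternating_step {R : Type*} [CommRing R] (q : R) (n : ℕ) :
    ∑ k ∈ Finset.range (n + 3), (-1) ^ k * qBinom q (n + 2) k =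
      (1 - q ^ (n + 1)) * ∑ k ∈ Finset.range (n + 1), (-1) ^ k * qBinom q n k := by
  have h1 : ∑ k ∈ Finset.range (n + 2), (-1) ^ k * qBinom q (n + 1) k =
      ∑ k ∈ Finset.range (n + 1), (-1) ^ (k + 1) * qBinom q (n + 1) (k + 1) + 1 := by
    rw [Finset.sum_range_succ']
    simp [qBinom_zero_right]
  have h2 : ∑ k ∈ Finset.range (n + 2), (-1) ^ (k + 1) * (q ^ (k + 1) * qBinom q (n + 1) (k + 1)) =
      ∑ k ∈ Finset.range (n + 1), (-1) ^ (k + 1) * (q ^ (k + 1) * qBinom q (n + 1) (k + 1)) := by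
    rw [Finset.sum_range_succ]
    simp [qBinom_eq_zero q (n + 1) (n + 1 + 1) (by omega)]
  have h3 : ∑ k ∈ Finset.range (n + 2), (-1) ^ (k + 1) * qBinom q (n + 2) (k + 1) =
      -∑ k ∈ Finset.range (n + 2), (-1) ^ k * qBinom q (n + 1) k +
      ∑ k ∈ Finset.range (n + 2),
        (-1) ^ (k + 1) * (q ^ (k + 1) * qBinom q (n + 1) (k + 1)) := by
    rw [← Finset.sum_neg_distrib, ← Finset.sum_add_distrib]
    refine Finset.sum_congr rfl fun k _ => ?_
    simp only [qBinom]
    ring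
  rw [Finset.sum_range_succ', h3, h2, h1, Finset.mul_sum, qBinom_zero_right, neg_add,
    ← Finset.sum_neg_distrib]
  have h4 : ∑ k ∈ Finset.range (n + 1), (1 - q ^ (n + 1)) * ((-1) ^ k * qBinom q n k) =
      ∑ k ∈ Finset.range (n + 1), -((-1) ^ (k + 1) * qBinom q (n + 1) (k + 1)) +
      ∑ k ∈ Finset.range (n + 1), (-1) ^ (k + 1) * (q ^ (k + 1) * qBinom q (n + 1) (k + 1)) := by
    rw [← Finset.sum_add_distrib]
    refine Finset.sum_congr rfl fun k hk => ?_
    have := qBinom_absorb q n k (by simpa [Nat.lt_succ_iff] using hk)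
    linear_combination -(-1) ^ k * this
  rw [h4]
  ring

/-- Gauss's alternating sum of `q`-binomial coefficients. -/
theorem alternating_sum {R : Type*} [CommRing R] (q : R) (m : ℕ) :
    ∑ k ∈ Finset.range (2 * m + 1), (-1) ^ k * qBinom q (2 * m) k =
      ∏ t ∈ Finset.range m, (1 - q ^ (2 * t + 1)) := by
  induction m with
  | zero => simp [qBinom_zero_right]
  | succ m ih =>
    rw [Finset.prod_range_succ, ← ih, mul_comm (Finset.sum _ _)]
    exact alternating_step q (2 * m)

/-- At a primitive `N`-th root of unity, the ratio `(1 - ζ ^ (N - 1 - k)) / (1 - ζ ^ (k + 1))` of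
consecutive coefficients `[N - 1, k]` collapses to `-ζ ^ (-(k + 1))`. -/
theorem qBinom_root {ζ : ℂ} {m : ℕ} (hζ : IsPrimitiveRoot ζ (2 * m + 1)) (k : ℕ)
    (hk : k < 2 * m) :
    ζ ^ (k + 1) * qBinom ζ (2 * m) (k + 1) = -qBinom ζ (2 * m) k := by
  obtain ⟨d, hd⟩ := Nat.exists_eq_add_of_le hk.le
  have h1 := qBinom_ratio ζ (2 * m) k d hd
  have h2 : ζ ^ (k + 1) * ζ ^ d = 1 := by
    rw [← pow_add, ← hζ.pow_eq_one]; congr 1; omega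
  have h3 : (1 - ζ ^ (k + 1)) ≠ 0 :=
    sub_ne_zero.2 (hζ.pow_ne_one_of_pos_of_lt (by omega) (by omega)).symm
  apply mul_left_cancel₀ h3
  linear_combination ζ ^ (k + 1) * h1 - qBinom ζ (2 * m) k * h2

/-! ### The argument of the Gauss sum -/

/-- The product `∏ (1 - ζ ^ j)` over odd `j < N` is a positive multiple of
`(-i) ^ m * exp (π i / N) ^ (m²)`; the exponent is `m² = 1 + 3 + ⋯ + (2m - 1)`. -/
theorem odd_prod (m : ℕ) : ∃ P : ℝ, 0 < P ∧
    ∏ t ∈ Finset.range m, (1 - Complex.exp (2 * Real.pi * Complex.I / (2 * m + 1 : ℕ)) ^ (2 * t + 1)) =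
      (-Complex.I) ^ m * Complex.exp (Real.pi * Complex.I / (2 * m + 1 : ℕ)) ^ (m ^ 2) * P := by
  refine ⟨∏ t ∈ Finset.range m, 2 * Real.sin (Real.pi * (2 * t + 1) / (2 * m + 1 : ℕ)), ?_, ?_⟩
  · refine Finset.prod_pos fun t ht => mul_pos two_pos (Real.sin_pos_of_pos_of_lt_pi ?_ ?_)
    · positivity
    · rw [div_lt_iff₀ (by positivity)]
      have : (t : ℝ) + 1 ≤ m := by exact_mod_cast Finset.mem_range.1 ht
      push_cast
      nlinarith [Real.pi_pos]
  · have hsum : m ^ 2 = ∑ t ∈ Finset.range m, (2 * t + 1) := by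
      induction m with
      | zero => rfl
      | succ m ih => rw [Finset.sum_range_succ, ← ih]; ring
    conv_rhs => rw [hsum, ← Finset.prod_pow_eq_pow_sum, ← Finset.card_range m, ← Finset.prod_const,
      Finset.card_range]
    rw [Complex.ofReal_prod, ← Finset.prod_mul_distrib, ← Finset.prod_mul_distrib]
    refine Finset.prod_congr rfl fun t _ => ?_
    push_cast
    rw [Complex.two_sin, ← Complex.exp_nat_mul, ← Complex.exp_nat_mul]
    push_cast
    set x : ℂ := Real.pi * (2 * t + 1) / (2 * m + 1) with hx
    rw [show ((2 * t + 1 : ℂ)) * (2 * Real.pi * Complex.I / (2 * m + 1)) =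
          x * Complex.I + x * Complex.I by
        rw [hx]; ring,
      show ((2 * t + 1 : ℂ)) * (Real.pi * Complex.I / (2 * m + 1)) = x * Complex.I by
        rw [hx]; ring, Complex.exp_add]
    have : Complex.exp (x * Complex.I) * Complex.exp (-x * Complex.I) = 1 := by
      rw [← Complex.exp_add]; simp
    linear_combination (-1 : ℂ) * this + (Complex.exp (x * Complex.I) *
      (Complex.exp (-x * Complex.I) - Complex.exp (x * Complex.I))) * Complex.I_sq


theorem std_natCast (N : ℕ) [NeZero N] (a : ℕ) :
    ZMod.stdAddChar (a : ZMod N) = Complex.exp (2 * Real.pi * Complex.I / N) ^ a := by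
  have := ZMod.stdAddChar_coe (N := N) (a : ℤ)
  push_cast at this
  rw [this, ← Complex.exp_nat_mul]
  congr 1
  ring

theorem two_mul_half_s3 (m : ℕ) : 2 * ((m : ZMod (2 * m + 1)) + 1) = 1 := by
  have := ZMod.natCast_self (2 * m + 1)
  push_cast at this
  linear_combination this

/-- Gauss's product formula for the quadratic Gauss sum, as the alternating `q`-binomial sum at
`q = ζ`. -/
theorem gauss_prod (m : ℕ) :
    ∑ k : ZMod (2 * m + 1), (ZMod.stdAddChar (N := 2 * m + 1) (-(m + 1) * (k ^ 2 + k)) : ℂ) =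
     ∏ t ∈ Finset.range m,
      (1 - Complex.exp (2 * Real.pi * Complex.I / (2 * m + 1 : ℕ)) ^ (2 * t + 1)) := by
  have hprim := Complex.isPrimitiveRoot_exp (2 * m + 1) (by omega)
  have hone := std_natCast (2 * m + 1)
  set ζ := Complex.exp (2 * Real.pi * Complex.I / (2 * m + 1 : ℕ)) with hζ
  rw [← alternating_sum]
  have hR : ∀ k : ℕ, k < 2 * m + 1 →
      (-1) ^ k * qBinom ζ (2 * m) k =
        ZMod.stdAddChar (N := 2 * m + 1) (-(m + 1) * ((k : ZMod (2 * m + 1)) ^ 2 + k)) := by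
    intro k hk
    induction k with
    | zero => simp [qBinom_zero_right]
    | succ k ih =>
      have h1 := qBinom_root hprim k (by omega)
      have h2 : (-(m + 1) * (((k + 1 : ℕ) : ZMod (2 * m + 1)) ^ 2 + (k + 1 : ℕ))) +
          ((k + 1 : ℕ) : ZMod (2 * m + 1)) = -(m + 1) * ((k : ZMod (2 * m + 1)) ^ 2 + k) := by
        push_cast
        linear_combination (-(k:ZMod (2 * m + 1)) - 1) * two_mul_half_s3 m
      have h3 := congrArg (fun x => (ZMod.stdAddChar x : ℂ)) h2
      simp only [AddChar.map_add_eq_mul, hone] at h3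
      rw [← ih (by omega)] at h3
      apply mul_right_cancel₀ (pow_ne_zero (k + 1) (hprim.ne_zero (by omega)))
      rw [h3]
      linear_combination (-1) ^ (k + 1) * h1
  rw [Finset.sum_congr rfl fun k hk => hR k (Finset.mem_range.1 hk),
    Finset.sum_range (fun k => (ZMod.stdAddChar (N := 2 * m + 1) (-(m + 1) * ((k : ZMod (2 * m + 1)) ^ 2 + k)) : ℂ))]
  refine Finset.sum_congr rfl fun k _ => ?_
  exact congrArg (fun x : ZMod (2 * m + 1) => (ZMod.stdAddChar (N := 2 * m + 1) (-(m + 1) * (x ^ 2 + x)) : ℂ))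
    (Fin.cast_val_eq_self (n := 2 * m + 1) k).symm

theorem gauss_shift (m : ℕ) (a : ZMod (2 * m + 1)) :
    ∑ k : ZMod (2 * m + 1), (ZMod.stdAddChar (N := 2 * m + 1) (-(m + 1) * (k + a) ^ 2) : ℂ) =
      ∑ k : ZMod (2 * m + 1), (ZMod.stdAddChar (N := 2 * m + 1) (-(m + 1) * k ^ 2) : ℂ) :=
  Equiv.sum_comp (Equiv.addRight a) (fun k => (ZMod.stdAddChar (N := 2 * m + 1) (-(m + 1) * k ^ 2) : ℂ))

/-- The Gauss sum `∑ k, ζ ^ (-k² / 2)` is a positive multiple of `i ^ m`. -/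
theorem gauss_arg (m : ℕ) : ∃ P : ℝ, 0 < P ∧
    ∑ k : ZMod (2 * m + 1), (ZMod.stdAddChar (N := 2 * m + 1) (-(m + 1) * k ^ 2) : ℂ) = Complex.I ^ m * P := by
  obtain ⟨P, hP, h⟩ := odd_prod m
  refine ⟨P, hP, ?_⟩
  rw [← gauss_prod] at h
  set w := Complex.exp (Real.pi * Complex.I / (2 * m + 1 : ℕ)) with hw
  have hwN : w ^ (2 * m + 1) = -1 := by
    rw [hw, ← Complex.exp_nat_mul, mul_div_cancel₀ _ (Nat.cast_ne_zero.2 (by omega)), Complex.exp_pi_mul_I]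
  have hζw : Complex.exp (2 * Real.pi * Complex.I / (2 * m + 1 : ℕ)) = w ^ 2 := by
    rw [hw, ← Complex.exp_nat_mul]; congr 1; push_cast; ring
  -- `k² + k = (k + h)² - h²` mod `N`, so translating `k` by `h` costs a factor `ζ ^ (h³)`.
  have hsq : ∑ k : ZMod (2 * m + 1), (ZMod.stdAddChar (N := 2 * m + 1) (-(m + 1) * k ^ 2) : ℂ) *
        w ^ (2 * (m + 1) ^ 3) =
      ∑ k : ZMod (2 * m + 1), (ZMod.stdAddChar (N := 2 * m + 1) (-(m + 1) * (k ^ 2 + k)) : ℂ) := by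
    rw [← Finset.sum_mul, ← gauss_shift m (m + 1), Finset.sum_mul, pow_mul, ← hζw, ← std_natCast]
    refine Finset.sum_congr rfl fun k _ => ?_
    rw [← AddChar.map_add_eq_mul]
    congr 1
    push_cast
    linear_combination (-((m : ZMod (2 * m + 1)) + 1) * k) * two_mul_half_s3 m
  -- With `h = m + 1` one has `2h³ - m² = N (h² + 1)`, and `w ^ N = -1`.
  have hphase : w ^ (2 * (m + 1) ^ 3) = w ^ (m ^ 2) * (-1) ^ m := by
    have : 2 * (m + 1) ^ 3 = m ^ 2 + (2 * m + 1) * (m ^ 2 + 2 * m + 2) := by ring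
    rw [this, pow_add, pow_mul w (2 * m + 1), hwN]
    congr 1
    rcases Nat.even_or_odd m with hm | hm
    · rw [hm.neg_one_pow, Even.neg_one_pow]
      simp [hm, parity_simps]
    · rw [hm.neg_one_pow, Odd.neg_one_pow]
      have : ¬ Even m := by simpa using hm
      rw [← Nat.not_even_iff_odd]
      simp [this, parity_simps]
  rw [← Finset.sum_mul, h, hphase] at hsq
  have hw0 : w ^ (m ^ 2) ≠ 0 := pow_ne_zero _ (Complex.exp_ne_zero _)
  have hneg : (-1 : ℂ) ^ m * (-1) ^ m = 1 := by rw [← mul_pow]; simp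
  apply mul_right_cancel₀ hw0
  rw [neg_pow] at hsq
  linear_combination (-1) ^ m * hsq -
    (∑ k : ZMod (2 * m + 1), (ZMod.stdAddChar (N := 2 * m + 1) (-(m + 1) * k ^ 2) : ℂ) -
      Complex.I ^ m * P) * w ^ (m ^ 2) * hneg

/-! ### The matrix `T⁻¹ S` -/

/-- The matrix `Q = T⁻¹ S` in closed form, `Q i j = N ^ (-1/2) * ζ ^ (-(m + 1) i² - i j)`, indexed
by `ZMod N` with `N = 2m + 1`. -/
noncomputable def qMat (m : ℕ) : Matrix (ZMod (2 * m + 1)) (ZMod (2 * m + 1)) ℂ :=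
  Matrix.of fun i j => ((Real.sqrt (2 * m + 1 : ℕ) : ℂ))⁻¹ *
    ZMod.stdAddChar (N := 2 * m + 1) (-(m + 1) * i ^ 2 - i * j)

theorem sqrt_inv_sq (m : ℕ) :
    ((Real.sqrt (2 * m + 1 : ℕ) : ℂ))⁻¹ * ((Real.sqrt (2 * m + 1 : ℕ) : ℂ))⁻¹ =
    ((2 * m + 1 : ℕ) : ℂ)⁻¹ := by
  rw [← mul_inv, ← Complex.ofReal_mul, Real.mul_self_sqrt (by positivity), Complex.ofReal_natCast]

open Matrix in
theorem qMat_conjTranspose (m : ℕ) (i j : ZMod (2 * m + 1)) :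
    (qMat m)ᴴ i j = ((Real.sqrt (2 * m + 1 : ℕ) : ℂ))⁻¹ *
      ZMod.stdAddChar (N := 2 * m + 1) ((m + 1) * j ^ 2 + i * j) := by
  rw [conjTranspose_apply, qMat, of_apply, ← starRingEnd_apply, map_mul, map_inv₀,
    Complex.conj_ofReal, ← AddChar.map_neg_eq_conj]
  congr 2
  ring

open Matrix in
theorem qMat_unitary (m : ℕ) : qMat m * (qMat m)ᴴ = 1 := by
  ext i j
  have hterm : ∀ k, qMat m i k * (qMat m)ᴴ k j = ((2 * m + 1 : ℕ) : ℂ)⁻¹ *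
      (ZMod.stdAddChar (N := 2 * m + 1) (-(m + 1) * i ^ 2 + (m + 1) * j ^ 2) * ZMod.stdAddChar (N := 2 * m + 1) (k * (j - i))) := by
    intro k
    rw [← AddChar.map_add_eq_mul, ← sqrt_inv_sq]
    rw [qMat_conjTranspose, qMat, of_apply, mul_mul_mul_comm, ← AddChar.map_add_eq_mul]
    congr 2
    ring
  rw [mul_apply, Finset.sum_congr rfl fun k _ => hterm k, ← Finset.mul_sum, ← Finset.mul_sum,
    AddChar.sum_mulShift _ (ZMod.isPrimitive_stdAddChar (2 * m + 1))]
  by_cases hij : i = j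
  · subst hij
    have : (2 * m + 1 : ℂ) ≠ 0 := by exact_mod_cast (by omega : 2 * m + 1 ≠ 0)
    rw [show -((m : ZMod (2 * m + 1)) + 1) * i ^ 2 + (m + 1) * i ^ 2 = 0 by ring]
    simp [this]
  · simp [hij, sub_eq_zero, Ne.symm hij]

open Matrix in
theorem qMat_sq (m : ℕ) : qMat m * qMat m = (((Real.sqrt (2 * m + 1 : ℕ) : ℂ))⁻¹ *
    ∑ k : ZMod (2 * m + 1), (ZMod.stdAddChar (N := 2 * m + 1) (-(m + 1) * k ^ 2) : ℂ)) • (qMat m)ᴴ := by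
  ext i j
  have hterm : ∀ k, qMat m i k * qMat m k j = ((2 * m + 1 : ℕ) : ℂ)⁻¹ *
      (ZMod.stdAddChar (N := 2 * m + 1) ((m + 1) * j ^ 2 + i * j) *
        ZMod.stdAddChar (N := 2 * m + 1) (-(m + 1) * (k + (i + j)) ^ 2)) := by
    intro k
    rw [← AddChar.map_add_eq_mul, ← sqrt_inv_sq]
    simp only [qMat, of_apply]
    rw [mul_mul_mul_comm, ← AddChar.map_add_eq_mul]
    congr 2
    linear_combination (i * j + k * (i + j)) * two_mul_half_s3 m
  rw [mul_apply, Finset.sum_congr rfl fun k _ => hterm k, ← Finset.mul_sum, ← Finset.mul_sum,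
    gauss_shift]
  rw [Matrix.smul_apply, smul_eq_mul, qMat_conjTranspose, ← sqrt_inv_sq]
  ring

open Matrix in
theorem qMat_cube (m : ℕ) :
    qMat m ^ 3 = Complex.I ^ m • (1 : Matrix (ZMod (2 * m + 1)) (ZMod (2 * m + 1)) ℂ) := by
  obtain ⟨P, hP, hG⟩ := gauss_arg m
  have hU := qMat_unitary m
  set r : ℝ := (Real.sqrt (2 * m + 1 : ℕ))⁻¹ * P with hr
  have hr0 : 0 < r := by positivity
  have hsq : qMat m * qMat m = (Complex.I ^ m * r) • (qMat m)ᴴ := by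
    rw [qMat_sq, hG, hr]
    congr 1
    push_cast
    ring
  have hcube : qMat m ^ 3 = (Complex.I ^ m * r) • (1 : Matrix (ZMod (2 * m + 1)) (ZMod (2 * m + 1)) ℂ) := by
    rw [pow_succ', pow_two, hsq, Matrix.mul_smul, hU]
  have hone : qMat m ^ 3 * (qMat m ^ 3)ᴴ = 1 := by
    rw [conjTranspose_pow]
    exact pow_mul_pow_eq_one 3 hU
  rw [hcube, conjTranspose_smul, conjTranspose_one, smul_mul_smul_comm, one_mul] at hone
  have h00 := congrFun (congrFun hone 0) 0
  simp only [Matrix.smul_apply, one_apply_eq, smul_eq_mul, mul_one, ← starRingEnd_apply,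
    Complex.mul_conj, Complex.normSq_mul, map_pow, Complex.normSq_I, one_pow, one_mul,
    Complex.normSq_ofReal] at h00
  have hr1 : r = 1 := by
    have : r * r = 1 := by exact_mod_cast h00
    nlinarith
  rw [hcube, hr1]
  simp

/-- `φ⁻¹ = i ^ m`: as `2 (m + 1) ≡ 1` mod `N`, the symbol of `m + 1` equals that of `2`, which is
determined by `N` mod `8`. -/
theorem phi_eq (m : ℕ) (hm : 1 ≤ m) :
    (if (2 * m + 1) % 4 = 1 then ((jacobiSym ((m : ℤ) + 1) (2 * m + 1) : ℤ) : ℂ)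
      else ((jacobiSym ((m : ℤ) + 1) (2 * m + 1) : ℤ) : ℂ) * Complex.I)⁻¹ = Complex.I ^ m := by
  have h1 : jacobiSym ((m : ℤ) + 1) (2 * m + 1) = jacobiSym 2 (2 * m + 1) := by
    have h2 : jacobiSym 2 (2 * m + 1) * jacobiSym ((m : ℤ) + 1) (2 * m + 1) = 1 := by
      rw [← jacobiSym.mul_left, jacobiSym.mod_left,
        show (2 * ((m : ℤ) + 1)) % ((2 * m + 1 : ℕ) : ℤ) = 1 by
          rw [show 2 * ((m : ℤ) + 1) = 1 + ((2 * m + 1 : ℕ) : ℤ) by push_cast; ring,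
            Int.add_emod_right]
          exact Int.emod_eq_of_lt (by norm_num) (by push_cast; omega), jacobiSym.one_left]
    rcases Int.mul_eq_one_iff_eq_one_or_neg_one.1 h2 with h | h <;> rw [h.1, h.2]
  rw [h1, jacobiSym.at_two ⟨m, rfl⟩, ZMod.χ₈_nat_eq_if_mod_eight]
  obtain ⟨q, r, hr, rfl⟩ : ∃ q r, r < 4 ∧ m = 4 * q + r := ⟨m / 4, m % 4, by omega, by omega⟩
  rw [pow_add, pow_mul, Complex.I_pow_four, one_pow, one_mul]
  have hodd : ¬ (2 * (4 * q + r) + 1) % 2 = 0 := by omega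
  rw [if_neg hodd]
  interval_cases r
  · rw [if_pos (by omega), if_pos (by omega)]; simp
  · rw [if_neg (by omega), if_neg (by omega)]; simp
  · rw [if_pos (by omega), if_neg (by omega)]; simp
  · rw [if_neg (by omega), if_pos (by omega)]; simp [pow_succ]


/-- With `N`, `m`, `ζ`, `S`, `T`, `φ_N` as in the context, `T` is
invertible and `𝒬_N := T⁻¹S` satisfies `𝒬_N³ = φ_N⁻¹ · I_N`; in particular
`𝒬_N` is projectively of order 3 (its cube is a nonzero scalar matrix). -/
theorem stmt3 (N : ℕ) (hNodd : Odd N) (hN3 : 3 ≤ N)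
    (m : ℕ) (hm : m = (N - 1) / 2)
    (ζ : ℂ) (hζ : ζ = Complex.exp (2 * Real.pi * Complex.I / N))
    (S T : Matrix (Fin N) (Fin N) ℂ)
    (hS : ∀ i j : Fin N, S i j = ((Real.sqrt N : ℂ))⁻¹ * ζ ^ (i.val * j.val))
    (hT : ∀ i j : Fin N, T i j =
      ζ ^ ((m + 1) * i.val ^ 2) * (if (i.val + j.val) % N = 0 then 1 else 0))
    (φ : ℂ)
    (hφ : φ = if N % 4 = 1 then ((jacobiSym ((m : ℤ) + 1) N : ℤ) : ℂ)
              else ((jacobiSym ((m : ℤ) + 1) N : ℤ) : ℂ) * Complex.I) :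
    IsUnit T ∧ (T⁻¹ * S) ^ 3 = φ⁻¹ • (1 : Matrix (Fin N) (Fin N) ℂ)
      ∧ ∃ c : ℂ, c ≠ 0 ∧ (T⁻¹ * S) ^ 3 = c • (1 : Matrix (Fin N) (Fin N) ℂ) := by
  obtain ⟨m', hN⟩ := hNodd
  obtain rfl : m = m' := by omega
  subst hN
  have hφI : φ⁻¹ = Complex.I ^ m := by rw [hφ, phi_eq m (by omega)]
  let n := 2 * m + 1
  -- `Fin (2 * m + 1)` and `ZMod (2 * m + 1)` agree definitionally.
  change Matrix (ZMod n) (ZMod n) ℂ at S T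
  have hval : ∀ i : Fin n, ((i.val : ℕ) : ZMod n) = i := fun i =>
    Fin.cast_val_eq_self (n := n) i
  have hS' : ∀ i j : ZMod n, S i j = ((Real.sqrt n : ℂ))⁻¹ * ZMod.stdAddChar (N := 2 * m + 1) (i * j) := by
    intro i j
    rw [hS i j, hζ, ← std_natCast, Nat.cast_mul, hval i, hval j]
  have hT' : ∀ i j : ZMod n, T i j =
      ZMod.stdAddChar (N := 2 * m + 1) ((m + 1) * i ^ 2) * (if j = -i then 1 else 0) := by
    intro i j
    have hiff : (Fin.val i + Fin.val j) % n = 0 ↔ j = -i := by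
      rw [← Nat.dvd_iff_mod_eq_zero, ← ZMod.natCast_eq_zero_iff, Nat.cast_add, hval i, hval j,
        eq_neg_iff_add_eq_zero, add_comm]
    rw [hT i j, hζ, ← std_natCast]
    push_cast
    rw [hval i]
    congr 1
    exact if_congr hiff rfl rfl
  have hTm : ∀ (M : Matrix (ZMod n) (ZMod n) ℂ) (i j : ZMod n), (T * M) i j =
      ZMod.stdAddChar (N := 2 * m + 1) ((m + 1) * i ^ 2) * M (-i) j := by
    intro M i j
    rw [Matrix.mul_apply, Finset.sum_eq_single (-i)]
    · rw [hT', if_pos rfl, mul_one]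
    · intro b _ hb
      rw [hT', if_neg hb]
      simp
    · simp
  have hTu : T * (Matrix.of fun i j : ZMod n =>
      ZMod.stdAddChar (N := 2 * m + 1) (-((m + 1) * j ^ 2)) * (if j = -i then (1 : ℂ) else 0)) = 1 := by
    ext i j
    rw [hTm, Matrix.of_apply, neg_neg, Matrix.one_apply]
    by_cases h : i = j
    · subst h
      rw [if_pos rfl, mul_one, ← AddChar.map_add_eq_mul]
      simp
    · rw [if_neg h, if_neg (Ne.symm h)]; simp
  have hTQ : T * qMat m = S := by
    ext i j
    rw [hTm, hS', qMat, Matrix.of_apply, mul_left_comm, ← AddChar.map_add_eq_mul]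
    congr 2
    ring
  have hunit : IsUnit T := IsUnit.of_mul_eq_one _ hTu
  have hQ : T⁻¹ * S = qMat m := by
    rw [← hTQ, ← Matrix.mul_assoc, Matrix.nonsing_inv_mul T ((Matrix.isUnit_iff_isUnit_det T).1 hunit),
      Matrix.one_mul]
  have hcube : (T⁻¹ * S) ^ 3 = φ⁻¹ • (1 : Matrix (ZMod n) (ZMod n) ℂ) := by
    rw [hQ, hφI]
    exact qMat_cube m
  exact ⟨hunit, hcube, φ⁻¹, by rw [hφI]; exact pow_ne_zero _ Complex.I_ne_zero, hcube⟩
end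

section
/- Fix an odd integer N ≥ 3, m = (N−1)/2, ζ = exp(2πi/N), a sign * ∈ {+1,−1}, a point w₀ ∈ ℂ∖{0,1} with w₁ = (1−w₀)⁻¹ and w₂ = 1−w₀⁻¹, a flattening f ∈ ℤ³ and a charge c ∈ ℤ³. Then the N-th root cross-ratio moduli w′_k = exp((log(w_k) + iπ(N+1)(f_k − *c_k))/N), k = 0,1,2, satisfy w′₀ w′₁ w′₂ = −ζ^{*m}. -/
/-!
Put `F = f₀ + f₁ + f₂`. By the flattening and charge conditions, the exponents on the left add up to
`(-πiF + πi(N+1)(F - ε))/N = πiF - πiε(N+1)/N`, and for `N = 2m + 1` the last term equals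
`εm · 2πi/N - ε · 2πi`. Hence the product is `exp(πiF) ζ^{εm}`. Exponentiating the flattening
condition gives `exp(πiF) = (w₀w₁w₂)⁻¹ = -1`, that is, `F` is odd.
-/

/-- For odd `N ≥ 3`, `m = (N-1)/2`, `ζ = exp(2πi/N)`, a sign
`ε ∈ {±1}`, cross-ratios `w₀ ∈ ℂ∖{0,1}`, `w₁ = (1-w₀)⁻¹`, `w₂ = 1-w₀⁻¹`, a
flattening `f` and a charge `c`, the N-th root cross-ratio moduli
`w′_k = exp((log w_k + iπ(N+1)(f_k - ε c_k))/N)` satisfy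
`w′₀ w′₁ w′₂ = -ζ^{εm}`. -/
theorem stmt5 (N : ℕ) (hNodd : Odd N) (hN3 : 3 ≤ N)
    (m : ℕ) (hm : m = (N - 1) / 2)
    (ζ : ℂ) (hζ : ζ = Complex.exp (2 * Real.pi * Complex.I / N))
    (ε : ℤ) (hε : ε = 1 ∨ ε = -1)
    (w₀ w₁ w₂ : ℂ) (hw₀ : w₀ ≠ 0) (hw₀' : w₀ ≠ 1)
    (hw₁ : w₁ = (1 - w₀)⁻¹) (hw₂ : w₂ = 1 - w₀⁻¹)
    (f₀ f₁ f₂ c₀ c₁ c₂ : ℤ)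
    (hf : Complex.log w₀ + Complex.log w₁ + Complex.log w₂
            + Real.pi * Complex.I * ((f₀ : ℂ) + (f₁ : ℂ) + (f₂ : ℂ)) = 0)
    (hc : c₀ + c₁ + c₂ = 1) :
    Complex.exp ((Complex.log w₀
        + Real.pi * Complex.I * ((N : ℂ) + 1) * ((f₀ : ℂ) - (ε : ℂ) * (c₀ : ℂ))) / N)
    * Complex.exp ((Complex.log w₁
        + Real.pi * Complex.I * ((N : ℂ) + 1) * ((f₁ : ℂ) - (ε : ℂ) * (c₁ : ℂ))) / N)
    * Complex.exp ((Complex.log w₂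
        + Real.pi * Complex.I * ((N : ℂ) + 1) * ((f₂ : ℂ) - (ε : ℂ) * (c₂ : ℂ))) / N)
    = -ζ ^ (ε * (m : ℤ)) := by
  obtain ⟨k, rfl⟩ := hNodd
  obtain rfl : m = k := by omega
  have hN : ((2 * m + 1 : ℕ) : ℂ) ≠ 0 := by exact_mod_cast (by omega : 2 * m + 1 ≠ 0)
  have h1 : 1 - w₀ ≠ 0 := sub_ne_zero.2 hw₀'.symm
  have hw₁0 : w₁ ≠ 0 := hw₁ ▸ inv_ne_zero h1
  have hprod : w₀ * w₁ * w₂ = -1 := by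
    rw [hw₁, hw₂]
    field_simp
    ring
  have hw₂0 : w₂ ≠ 0 := by
    rintro rfl
    norm_num at hprod
  have hF : Complex.exp (Real.pi * Complex.I * ((f₀ : ℂ) + f₁ + f₂)) = -1 := by
    have h := congrArg Complex.exp hf
    rw [Complex.exp_add, Complex.exp_add, Complex.exp_add, Complex.exp_log hw₀,
      Complex.exp_log hw₁0, Complex.exp_log hw₂0, hprod, Complex.exp_zero] at h
    linear_combination -h
  have hε1 : Complex.exp ((ε : ℂ) * (2 * Real.pi * Complex.I)) = 1 :=
    Complex.exp_int_mul_two_pi_mul_I ε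
  have hcC : (c₀ : ℂ) + c₁ + c₂ = 1 := by exact_mod_cast hc
  have hexp : (Complex.log w₀ + Real.pi * Complex.I * (((2 * m + 1 : ℕ) : ℂ) + 1)
          * ((f₀ : ℂ) - (ε : ℂ) * (c₀ : ℂ))) / ((2 * m + 1 : ℕ) : ℂ)
      + (Complex.log w₁ + Real.pi * Complex.I * (((2 * m + 1 : ℕ) : ℂ) + 1)
          * ((f₁ : ℂ) - (ε : ℂ) * (c₁ : ℂ))) / ((2 * m + 1 : ℕ) : ℂ)
      + (Complex.log w₂ + Real.pi * Complex.I * (((2 * m + 1 : ℕ) : ℂ) + 1)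
          * ((f₂ : ℂ) - (ε : ℂ) * (c₂ : ℂ))) / ((2 * m + 1 : ℕ) : ℂ)
      = Real.pi * Complex.I * ((f₀ : ℂ) + f₁ + f₂)
        + ((ε * (m : ℤ) : ℤ) : ℂ) * (2 * Real.pi * Complex.I / ((2 * m + 1 : ℕ) : ℂ))
        - (ε : ℂ) * (2 * Real.pi * Complex.I) := by
    field_simp
    push_cast
    linear_combination hf - Real.pi * Complex.I * (2 * m + 2) * ε * hcC
  rw [← Complex.exp_add, ← Complex.exp_add, hexp, Complex.exp_sub, Complex.exp_add, hF, hε1,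
    Complex.exp_int_mul, ← hζ, div_one, neg_one_mul]
end

section
/- Fix an odd integer N ≥ 3, m = (N−1)/2, ζ = exp(2πi/N), a sign * ∈ {+1,−1}, and w₀ ∈ ℂ∖{0,1} with w₁ = (1−w₀)⁻¹ and w₂ = 1−w₀⁻¹. Let c ∈ ℤ³ be any charge, and let u₀, u₁, u₂ ∈ ℂ be N-th roots of the cross-ratios, i.e. u_k^N = w_k for k = 0,1,2, satisfying u₀u₁u₂ = −ζ^{*m}. Then there exists a flattening f ∈ ℤ³ such that u_k = exp((log(w_k) + iπ(N+1)(f_k − *c_k))/N) for k = 0,1,2. -/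
/-!
Every `N`-th root of `w ≠ 0` is `exp ((log w + 2πi n) / N)` for some integer `n`. Since `N` is odd,
`(N + 1) / 2` is invertible modulo `N` with inverse `2`, so the same root equals
`exp ((log w + πi (N + 1) (2 n + N t)) / N)` for every integer `t`. The flattenings giving the
prescribed roots are therefore `f_k = ε c_k + 2 n_k + N t_k` with arbitrary `t_k`, and only
the sum condition remains. From `w₀ w₁ w₂ = -1` the logarithms sum to `πi p` with `p` an (odd)
integer, and the condition on `u₀ u₁ u₂` says `p + 2 (n₀ + n₁ + n₂) + ε = N (1 + ε + 2 j)` for some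
integer `j`; so `t₀ = -(1 + ε + 2 j)`, `t₁ = t₂ = 0` works.
-/

theorem exists_root_eq_exp {N : ℕ} (hN : N ≠ 0) {u w : ℂ} (hw : w ≠ 0) (hu : u ^ N = w) :
    ∃ n : ℤ, u = Complex.exp ((Complex.log w + 2 * Real.pi * Complex.I * n) / N) := by
  have hu0 : u ≠ 0 := by
    rintro rfl
    exact hw (by rw [← hu, zero_pow hN])
  have hNC : (N : ℂ) ≠ 0 := Nat.cast_ne_zero.mpr hN
  have h : Complex.exp (N * Complex.log u) = Complex.exp (Complex.log w) := by
    rw [Complex.exp_nat_mul, Complex.exp_log hu0, Complex.exp_log hw, hu]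
  obtain ⟨n, hn⟩ := Complex.exp_eq_exp_iff_exists_int.mp h
  refine ⟨n, ?_⟩
  have h2 : (Complex.log w + 2 * Real.pi * Complex.I * n) / N = Complex.log u := by
    rw [div_eq_iff hNC]
    linear_combination -hn
  rw [h2, Complex.exp_log hu0]

/-- For odd `N` the half-integral shift `(N + 1) (2 n + N t) / 2` is congruent to `n` modulo `N`,
so it determines the same `N`-th root as `n`. -/
theorem exp_root_shift {N : ℕ} (hodd : Odd N) (L : ℂ) (n t : ℤ) (g : ℂ)
    (hg : g = 2 * n + N * t) :
    Complex.exp ((L + 2 * Real.pi * Complex.I * n) / N) =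
      Complex.exp ((L + Real.pi * Complex.I * ((N : ℂ) + 1) * g) / N) := by
  obtain ⟨m, rfl⟩ := hodd
  have hNC : ((2 * m + 1 : ℕ) : ℂ) ≠ 0 := Nat.cast_ne_zero.mpr (by omega)
  rw [Complex.exp_eq_exp_iff_exists_int]
  refine ⟨-(n + (m + 1) * t), ?_⟩
  subst hg
  push_cast at hNC ⊢
  field_simp
  ring


/-- For odd `N ≥ 3`, `m = (N-1)/2`, `ζ = exp(2πi/N)`, a sign
`ε ∈ {±1}`, cross-ratios `w₀ ∈ ℂ∖{0,1}`, `w₁ = (1-w₀)⁻¹`, `w₂ = 1-w₀⁻¹`, any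
charge `c`, and N-th roots `u_k` of the `w_k` with `u₀u₁u₂ = -ζ^{εm}`, there
is a flattening `f` such that
`u_k = exp((log w_k + iπ(N+1)(f_k - εc_k))/N)` for `k = 0,1,2`. -/
theorem stmt8 (N : ℕ) (hNodd : Odd N) (hN3 : 3 ≤ N)
    (m : ℕ) (hm : m = (N - 1) / 2)
    (ζ : ℂ) (hζ : ζ = Complex.exp (2 * Real.pi * Complex.I / N))
    (ε : ℤ) (hε : ε = 1 ∨ ε = -1)
    (w₀ w₁ w₂ : ℂ) (hw₀ : w₀ ≠ 0) (hw₀' : w₀ ≠ 1)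
    (hw₁ : w₁ = (1 - w₀)⁻¹) (hw₂ : w₂ = 1 - w₀⁻¹)
    (c₀ c₁ c₂ : ℤ) (hc : c₀ + c₁ + c₂ = 1)
    (u₀ u₁ u₂ : ℂ)
    (hu₀ : u₀ ^ N = w₀) (hu₁ : u₁ ^ N = w₁) (hu₂ : u₂ ^ N = w₂)
    (huprod : u₀ * u₁ * u₂ = -ζ ^ (ε * (m : ℤ))) :
    ∃ f₀ f₁ f₂ : ℤ,
      (Complex.log w₀ + Complex.log w₁ + Complex.log w₂
          + Real.pi * Complex.I * ((f₀ : ℂ) + (f₁ : ℂ) + (f₂ : ℂ)) = 0)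
      ∧ u₀ = Complex.exp ((Complex.log w₀
          + Real.pi * Complex.I * ((N : ℂ) + 1) * ((f₀ : ℂ) - (ε : ℂ) * (c₀ : ℂ))) / N)
      ∧ u₁ = Complex.exp ((Complex.log w₁
          + Real.pi * Complex.I * ((N : ℂ) + 1) * ((f₁ : ℂ) - (ε : ℂ) * (c₁ : ℂ))) / N)
      ∧ u₂ = Complex.exp ((Complex.log w₂
          + Real.pi * Complex.I * ((N : ℂ) + 1) * ((f₂ : ℂ) - (ε : ℂ) * (c₂ : ℂ))) / N) := by
  have hN0 : N ≠ 0 := by omega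
  have hNC : (N : ℂ) ≠ 0 := Nat.cast_ne_zero.mpr hN0
  have hpi : (Real.pi : ℂ) * Complex.I ≠ 0 :=
    mul_ne_zero (Complex.ofReal_ne_zero.mpr Real.pi_ne_zero) Complex.I_ne_zero
  have h1 : 1 - w₀ ≠ 0 := sub_ne_zero.mpr hw₀'.symm
  have hw₁0 : w₁ ≠ 0 := hw₁ ▸ inv_ne_zero h1
  have hprod : w₀ * w₁ * w₂ = -1 := by
    rw [hw₁, hw₂]
    field_simp
    ring
  have hw₂0 : w₂ ≠ 0 := by
    rintro rfl
    simp at hprod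
  have hNm : (N : ℂ) = 2 * m + 1 := by
    have : N = 2 * m + 1 := by
      obtain ⟨k, rfl⟩ := hNodd
      omega
    exact_mod_cast this
  obtain ⟨q, hq⟩ : ∃ q : ℤ, Complex.log w₀ + Complex.log w₁ + Complex.log w₂
      = Real.pi * Complex.I + q * (2 * Real.pi * Complex.I) := by
    rw [← Complex.exp_eq_exp_iff_exists_int, Complex.exp_add, Complex.exp_add,
      Complex.exp_log hw₀, Complex.exp_log hw₁0, Complex.exp_log hw₂0, hprod, Complex.exp_pi_mul_I]
  obtain ⟨n₀, hn₀⟩ := exists_root_eq_exp hN0 hw₀ hu₀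
  obtain ⟨n₁, hn₁⟩ := exists_root_eq_exp hN0 hw₁0 hu₁
  obtain ⟨n₂, hn₂⟩ := exists_root_eq_exp hN0 hw₂0 hu₂
  rw [hn₀, hn₁, hn₂, hζ, ← Complex.exp_int_mul, ← neg_one_mul, ← Complex.exp_pi_mul_I,
    ← Complex.exp_add, ← Complex.exp_add, ← Complex.exp_add,
    Complex.exp_eq_exp_iff_exists_int] at huprod
  obtain ⟨j, hj⟩ := huprod
  have key : (2 * q + 1 + 2 * (n₀ + n₁ + n₂) + ε : ℂ) = N * (1 + ε + 2 * j) := by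
    apply mul_left_cancel₀ hpi
    field_simp at hj
    push_cast at hj
    linear_combination hj - hq - Real.pi * Complex.I * ε * hNm
  have hcC : (c₀ + c₁ + c₂ : ℂ) = 1 := by exact_mod_cast hc
  refine ⟨ε * c₀ + 2 * n₀ + N * (-(1 + ε + 2 * j)), ε * c₁ + 2 * n₁, ε * c₂ + 2 * n₂, ?_, ?_, ?_, ?_⟩
  · push_cast
    linear_combination hq + Real.pi * Complex.I * (key + ε * hcC)
  · rw [hn₀]
    exact exp_root_shift hNodd _ n₀ (-(1 + ε + 2 * j)) _ (by push_cast; ring)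
  · rw [hn₁]
    exact exp_root_shift hNodd _ n₁ 0 _ (by push_cast; ring)
  · rw [hn₂]
    exact exp_root_shift hNodd _ n₂ 0 _ (by push_cast; ring)
end

section
/- Let w₀ ∈ ℂ∖{0,1}, and set w₁ = (1−w₀)⁻¹ and w₂ = 1−w₀⁻¹, where log denotes the branch of the complex logarithm with imaginary part in (−π,π]. Then log(w₀) + log(w₁) + log(w₂) = −iπ if Im(w₀) < 0, and log(w₀) + log(w₁) + log(w₂) = iπ if Im(w₀) ≥ 0. In particular, flattenings exist for every w₀ ∈ ℂ∖{0,1}: there is f ∈ ℤ³ with log(w₀)+log(w₁)+log(w₂) + iπ(f₀+f₁+f₂) = 0, and every such f has f₀+f₁+f₂ odd. -/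
/-!
Since `w₀ w₁ w₂ = -1`, the sum of the three logarithms is `iπ (2n + 1)` for some integer `n`, and
everything is decided by its imaginary part `arg w₀ + arg w₁ + arg w₂`. The three numbers have
imaginary parts of the same sign, so the sum of the arguments lies in `(-3π, 0)` when `Im w₀ < 0`
and in `[0, 3π]` when `Im w₀ ≥ 0`. The value `3π` would require all three numbers to be negative
reals, but `w₀ < 0` forces `w₁ > 0`; hence `n = -1` and `n = 0` respectively.
-/


/-- For `w₀ ∈ ℂ∖{0,1}`, `w₁ = (1-w₀)⁻¹`, `w₂ = 1-w₀⁻¹` (with log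
the branch with imaginary part in `(-π,π]`), one has
`log w₀ + log w₁ + log w₂ = -iπ` if `Im w₀ < 0` and `= iπ` if `Im w₀ ≥ 0`.
In particular flattenings exist, and every flattening `f` has `f₀+f₁+f₂` odd. -/
theorem stmt10 (w₀ w₁ w₂ : ℂ) (hw₀ : w₀ ≠ 0) (hw₀' : w₀ ≠ 1)
    (hw₁ : w₁ = (1 - w₀)⁻¹) (hw₂ : w₂ = 1 - w₀⁻¹) :
    (w₀.im < 0 →
      Complex.log w₀ + Complex.log w₁ + Complex.log w₂ = -(Real.pi * Complex.I))
    ∧ (0 ≤ w₀.im →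
      Complex.log w₀ + Complex.log w₁ + Complex.log w₂ = Real.pi * Complex.I)
    ∧ (∃ f₀ f₁ f₂ : ℤ,
        Complex.log w₀ + Complex.log w₁ + Complex.log w₂
          + Real.pi * Complex.I * ((f₀ : ℂ) + (f₁ : ℂ) + (f₂ : ℂ)) = 0)
    ∧ (∀ f₀ f₁ f₂ : ℤ,
        Complex.log w₀ + Complex.log w₁ + Complex.log w₂
          + Real.pi * Complex.I * ((f₀ : ℂ) + (f₁ : ℂ) + (f₂ : ℂ)) = 0 →
        Odd (f₀ + f₁ + f₂)) := by
  have hpi := Real.pi_pos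
  have h1 : 1 - w₀ ≠ 0 := sub_ne_zero.mpr (Ne.symm hw₀')
  have hn0 : 0 < Complex.normSq w₀ := Complex.normSq_pos.mpr hw₀
  have hn1 : 0 < Complex.normSq (1 - w₀) := Complex.normSq_pos.mpr h1
  have hw₁0 : w₁ ≠ 0 := hw₁ ▸ inv_ne_zero h1
  have hprod : w₀ * w₁ * w₂ = -1 := by
    rw [hw₁, hw₂]
    field_simp
    ring
  have hw₂0 : w₂ ≠ 0 := by
    rintro rfl
    simp at hprod
  have him1 : w₁.im = w₀.im / Complex.normSq (1 - w₀) := by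
    rw [hw₁, Complex.inv_im]
    simp
  have him2 : w₂.im = w₀.im / Complex.normSq w₀ := by
    rw [hw₂, Complex.sub_im, Complex.inv_im, Complex.one_im]
    ring
  have hre1 : w₁.re = (1 - w₀.re) / Complex.normSq (1 - w₀) := by
    rw [hw₁, Complex.inv_re]
    simp
  obtain ⟨n, hn⟩ : ∃ n : ℤ, Complex.log w₀ + Complex.log w₁ + Complex.log w₂
      = Real.pi * Complex.I + n * (2 * Real.pi * Complex.I) := by
    rw [← Complex.exp_eq_exp_iff_exists_int, Complex.exp_add, Complex.exp_add,
      Complex.exp_log hw₀, Complex.exp_log hw₁0, Complex.exp_log hw₂0, hprod,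
      Complex.exp_pi_mul_I]
  have harg : w₀.arg + w₁.arg + w₂.arg = (1 + 2 * (n : ℝ)) * Real.pi := by
    have h := congrArg Complex.im hn
    simp [Complex.log_im] at h
    linarith
  have hneg : w₀.im < 0 →
      Complex.log w₀ + Complex.log w₁ + Complex.log w₂ = -(Real.pi * Complex.I) := by
    intro h
    have a0 := Complex.arg_neg_iff.mpr h
    have a1 : w₁.arg < 0 := Complex.arg_neg_iff.mpr (him1 ▸ div_neg_of_neg_of_pos h hn1)
    have a2 : w₂.arg < 0 := Complex.arg_neg_iff.mpr (him2 ▸ div_neg_of_neg_of_pos h hn0)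
    have b0 := Complex.neg_pi_lt_arg w₀
    have b1 := Complex.neg_pi_lt_arg w₁
    have b2 := Complex.neg_pi_lt_arg w₂
    have c1 : 1 + 2 * (n : ℝ) < 0 := by
      by_contra! hc
      nlinarith
    have c2 : -3 < 1 + 2 * (n : ℝ) := by
      by_contra! hc
      nlinarith
    have c1' : 1 + 2 * n < 0 := by exact_mod_cast c1
    have c2' : -3 < 1 + 2 * n := by exact_mod_cast c2
    obtain rfl : n = -1 := by omega
    rw [hn]
    push_cast
    ring
  have hpos : 0 ≤ w₀.im →
      Complex.log w₀ + Complex.log w₁ + Complex.log w₂ = Real.pi * Complex.I := by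
    intro h
    have a0 := Complex.arg_nonneg_iff.mpr h
    have a1 : 0 ≤ w₁.arg := Complex.arg_nonneg_iff.mpr (him1 ▸ div_nonneg h hn1.le)
    have a2 : 0 ≤ w₂.arg := Complex.arg_nonneg_iff.mpr (him2 ▸ div_nonneg h hn0.le)
    have b0 := Complex.arg_le_pi w₀
    have b1 := Complex.arg_le_pi w₁
    have b2 := Complex.arg_le_pi w₂
    -- `w₀` and `w₁` cannot both be negative reals, so the value `3π` is excluded.
    have hlt : w₀.arg + w₁.arg < 2 * Real.pi := by
      by_contra! hc
      have r0 := (Complex.arg_eq_pi_iff.mp (show w₀.arg = Real.pi by linarith)).1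
      have r1 := (Complex.arg_eq_pi_iff.mp (show w₁.arg = Real.pi by linarith)).1
      have : 0 < w₁.re := hre1 ▸ div_pos (by linarith) hn1
      linarith
    have c1 : -1 < 1 + 2 * (n : ℝ) := by
      by_contra! hc
      nlinarith
    have c2 : 1 + 2 * (n : ℝ) < 3 := by
      by_contra! hc
      nlinarith
    have c1' : -1 < 1 + 2 * n := by exact_mod_cast c1
    have c2' : 1 + 2 * n < 3 := by exact_mod_cast c2
    obtain rfl : n = 0 := by omega
    rw [hn]
    push_cast
    ring
  refine ⟨hneg, hpos, ⟨-(1 + 2 * n), 0, 0, ?_⟩, fun f₀ f₁ f₂ hf => ?_⟩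
  · rw [hn]
    push_cast
    ring
  · rw [hn] at hf
    have hpiI : (Real.pi : ℂ) * Complex.I ≠ 0 :=
      mul_ne_zero (by exact_mod_cast hpi.ne') Complex.I_ne_zero
    have hz : (1 + 2 * n + (f₀ + f₁ + f₂) : ℂ) = 0 := by
      apply mul_left_cancel₀ hpiI
      linear_combination hf
    have hz' : 1 + 2 * n + (f₀ + f₁ + f₂) = 0 := by exact_mod_cast hz
    exact ⟨-n - 1, by omega⟩
end

section
/- Fix an odd integer N ≥ 3 and ζ = exp(2πi/N). Let u, v ∈ ℂ∖{0} satisfy u^N + v^{−N} = 1 (this forces u^N ≠ 1, so 1 − u^{−1}ζ^{−s} ≠ 0 for every integer s). Let R be an associative unital ℂ-algebra and A ∈ R with A^N = −1. Define Ψ(A) = Σ_{l=0}^{N−1} (∏_{s=1}^{l} (u^{−1}v^{−1})/(1 − u^{−1}ζ^{−s})) · A^l. Then Ψ satisfies the functional relation Ψ(ζ^{−1}A) = Ψ(A) · (u·1 − v^{−1}A), where Ψ(ζ^{−1}A) = Σ_{l=0}^{N−1} ζ^{−l} (∏_{s=1}^{l} (u^{−1}v^{−1})/(1 − u^{−1}ζ^{−s}))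 · A^l. -/
/-!
Write `c l` for the coefficients of `Ψ`. They satisfy the recursion
`(u - ζ⁻ˡ) c l = v⁻¹ c (l - 1)` (`psiCoeff_succ`), so, comparing coefficients of `A ^ l`, the
relation holds in every degree `1 ≤ l < N`. Only the degree `N` term of `Ψ(A) (u - v⁻¹ A)` has to
wrap around to degree `0`, which amounts to `c N • A ^ N = 1`. This holds because
`∏_{s=1}^{N} (u - ζ⁻ˢ) = u ^ N - 1 = -v⁻ᴺ` on the curve, hence `c N = -1` (`psiCoeff_top`).
-/

/-- The coefficient `c l` of `A ^ l` in `Ψ(A)`, for every natural number `l` and not only `l < N`. -/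
noncomputable def psiCoeff (ζ u v : ℂ) (l : ℕ) : ℂ :=
  ∏ s ∈ Finset.Icc 1 l, (u⁻¹ * v⁻¹) / (1 - u⁻¹ * ζ ^ (-(s : ℤ)))

/-- The `N`-th roots of unity, enumerated as `ζ⁻¹, …, ζ⁻ᴺ`, are the roots of `X ^ N - 1`. -/
theorem prod_sub_zeta {N : ℕ} (hN : 0 < N) {ζ : ℂ} (hζ : IsPrimitiveRoot ζ N) (u : ℂ) :
    ∏ s ∈ Finset.Icc 1 N, (u - ζ ^ (-(s : ℤ))) = u ^ N - 1 := by
  have h := X_pow_sub_C_eq_prod (α := ζ⁻¹) (a := 1) hζ.inv hN hζ.inv.pow_eq_one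
  have h2 := congrArg (Polynomial.eval u) h
  simp only [Polynomial.eval_sub, Polynomial.eval_pow, Polynomial.eval_X, Polynomial.eval_C,
    Polynomial.eval_prod] at h2
  have hI : Finset.Icc 1 N = Finset.Ico 1 (N + 1) := by ext; simp
  rw [h2, hI, Finset.prod_Ico_eq_prod_range, Nat.add_sub_cancel]
  refine Finset.prod_congr rfl fun i _ ↦ ?_
  rw [zpow_neg, zpow_natCast, ← inv_pow, add_comm, pow_succ]

/-- On the curve no factor `u - ζ⁻ˢ` vanishes, since `u ^ N = 1` would force `v⁻ᴺ = 0`. -/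
theorem sub_zeta_ne_zero {N : ℕ} {ζ u v : ℂ} (hζ : ζ ^ N = 1) (hv : v ≠ 0)
    (hcurve : u ^ N + (v⁻¹) ^ N = 1) (s : ℕ) : u - ζ ^ (-(s : ℤ)) ≠ 0 := by
  intro h
  have hu : u ^ N = 1 := by
    rw [sub_eq_zero.mp h, zpow_neg, zpow_natCast, inv_pow, ← pow_mul, mul_comm, pow_mul, hζ,
      one_pow, inv_one]
  rw [hu, add_eq_left] at hcurve
  exact pow_ne_zero N (inv_ne_zero hv) hcurve

/-- Clearing `u` from a factor of `psiCoeff`; valid also where the denominators vanish. -/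
theorem factor_eq {u : ℂ} (hu : u ≠ 0) (v z : ℂ) :
    (u⁻¹ * v⁻¹) / (1 - u⁻¹ * z) = v⁻¹ / (u - z) := by
  have h : 1 - u⁻¹ * z = u⁻¹ * (u - z) := by field_simp
  rw [h, mul_div_mul_left _ _ (inv_ne_zero hu)]

theorem psiCoeff_succ {ζ u : ℂ} (v : ℂ) (hu : u ≠ 0) (l : ℕ)
    (h : u - ζ ^ (-((l + 1 : ℕ) : ℤ)) ≠ 0) :
    (u - ζ ^ (-((l + 1 : ℕ) : ℤ))) * psiCoeff ζ u v (l + 1) = v⁻¹ * psiCoeff ζ u v l := by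
  rw [psiCoeff, Finset.prod_Icc_succ_top (by omega), factor_eq hu, ← psiCoeff]
  field_simp

theorem psiCoeff_top {N : ℕ} (hN : 0 < N) {ζ u v : ℂ} (hζ : IsPrimitiveRoot ζ N) (hu : u ≠ 0)
    (hv : v ≠ 0) (hcurve : u ^ N + (v⁻¹) ^ N = 1) : psiCoeff ζ u v N = -1 := by
  have h : u ^ N - 1 = -(v⁻¹) ^ N := by linear_combination hcurve
  simp only [psiCoeff, factor_eq hu]
  rw [Finset.prod_div_distrib, prod_sub_zeta hN hζ, h, Finset.prod_const, Nat.card_Icc,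
    Nat.add_sub_cancel, div_neg, div_self (pow_ne_zero N (inv_ne_zero hv))]

/-- For odd `N ≥ 3`, `ζ = exp(2πi/N)`, `u, v ∈ ℂ*` with
`u^N + v^{-N} = 1`, and `A` an element of an associative unital ℂ-algebra `R`
with `A^N = -1`, the operator `Ψ(A) = Σ_{l<N} (∏_{s=1}^{l} (u⁻¹v⁻¹)/(1-u⁻¹ζ^{-s})) A^l`
satisfies `Ψ(ζ⁻¹A) = Ψ(A)·(u·1 - v⁻¹A)`. -/
theorem stmt11 (N : ℕ) (hNodd : Odd N) (hN3 : 3 ≤ N)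
    (ζ : ℂ) (hζ : ζ = Complex.exp (2 * Real.pi * Complex.I / N))
    (u v : ℂ) (hu : u ≠ 0) (hv : v ≠ 0)
    (hcurve : u ^ N + (v⁻¹) ^ N = 1)
    (R : Type*) [Ring R] [Algebra ℂ R]
    (A : R) (hA : A ^ N = -1) :
    (∑ l ∈ Finset.range N,
        (ζ ^ (-(l : ℤ)) * ∏ s ∈ Finset.Icc 1 l,
          (u⁻¹ * v⁻¹) / (1 - u⁻¹ * ζ ^ (-(s : ℤ)))) • A ^ l)
      = (∑ l ∈ Finset.range N,
          (∏ s ∈ Finset.Icc 1 l,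
            (u⁻¹ * v⁻¹) / (1 - u⁻¹ * ζ ^ (-(s : ℤ)))) • A ^ l)
        * (u • (1 : R) - v⁻¹ • A) := by
  have hprim : IsPrimitiveRoot ζ N := hζ ▸ Complex.isPrimitiveRoot_exp N (by omega)
  change ∑ l ∈ Finset.range N, (ζ ^ (-(l : ℤ)) * psiCoeff ζ u v l) • A ^ l
    = (∑ l ∈ Finset.range N, psiCoeff ζ u v l • A ^ l) * (u • (1 : R) - v⁻¹ • A)
  -- `f l` is the degree `l` part of `u Ψ(A) - Ψ(ζ⁻¹A)`; by the recursion `f (l + 1)` is also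
  -- `v⁻¹ c l A ^ (l + 1)`, so the discrepancy telescopes.
  let f : ℕ → R := fun l ↦ ((u - ζ ^ (-(l : ℤ))) * psiCoeff ζ u v l) • A ^ l
  have hterm : ∀ l, (psiCoeff ζ u v l • A ^ l) * (u • (1 : R) - v⁻¹ • A)
      = (ζ ^ (-(l : ℤ)) * psiCoeff ζ u v l) • A ^ l + (f l - f (l + 1)) := by
    intro l
    simp only [f]
    rw [psiCoeff_succ v hu l (sub_zeta_ne_zero hprim.pow_eq_one hv hcurve _), mul_sub,
      smul_mul_smul_comm, smul_mul_smul_comm, mul_one, ← pow_succ]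
    module
  have hwrap : f 0 = f N := by
    have hN : ζ ^ (-(N : ℤ)) = 1 := by rw [zpow_neg, zpow_natCast, hprim.pow_eq_one, inv_one]
    simp only [f]
    rw [psiCoeff_top (by omega) hprim hu hv hcurve, hA, hN]
    simp [psiCoeff]
    module
  rw [Finset.sum_mul, Finset.sum_congr rfl fun l _ ↦ hterm l, Finset.sum_add_distrib,
    Finset.sum_range_sub', hwrap, sub_self, add_zero]
end

section
/- Fix an odd integer N ≥ 3, m = (N−1)/2, ζ = exp(2πi/N), and (u,v) ∈ (ℂ*)² with u^N + v^N = 1 (hence u^N ≠ 1). Set [u] = N^{−1}(1−u^N)/(1−u), and for n ∈ ℤ let ω(u,v|n) = ∏_{j=1}^{[n]_N} v·(1−uζ^j)^{−1}, where [n]_N ∈ {0,…,N−1} is the residue of n mod N and ω(u,v|0) = 1. Define N²×N² complex matrices L and M, with entries indexed by pairs in (ℤ/Nℤ)², by L_{(i,j),(k,l)} = ζ^{kj+(m+1)k²} ω(u,v | i−k) δ_N(i+j−l) and M_{(k,l),(i,j)} = [u] ζ^{−kj−(m+1)k²} δ_N(i+j−l) ω(u/ζ, v | i−k)^{−1}, where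 δ_N(n) = 1 if n ≡ 0 mod N and 0 otherwise. Then M is a two-sided inverse of L: L·M = M·L = I_{N²}. (L is the basic matrix dilogarithm ℒ_N(u,v) up to the overall scalar h(u), which cancels against the factor [u]/h(u) in ℒ_N(u,v)^{−1}.) -/
/-!
`L * M = 1` is enough, the matrices being square. The entry of `L * M` at `(i,j), (i',j')` vanishes
unless `i + j = i' + j'`. In that case the quadratic phases cancel, and with `p = i - k` and
`d = i' - i` the entry becomes, up to a phase, `[u] ∑ₚ ζ^{-pd} ω(u,v|p) / ω(u/ζ,v|p+d)`.

The curve equation makes `n ↦ ω(u,v|n)` periodic modulo `N` when the defining product is used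
for every natural number `n` (`omega_add_period`), and
`ω(u/ζ,v|n) = ω(u,v|n) (1 - uζⁿ) / (1 - u)` (`omega_shift`). Hence the summand is
`(1 - u) / (1 - uζᵖ)` for `d = 0`, and a geometric expansion gives
`∑ₚ 1 / (1 - uζᵖ) = N / (1 - u^N)` (`sum_inv_one_sub`). For `0 < d < N` the summand is
`ζ^{-pd} (1 - u) v^{-d} ∏_{t=1}^{d-1} (1 - uζ^{p+t})` (`omega_ratio`), a Laurent polynomial in `ζᵖ` with exponents
between `-d` and `-1`, so its sum over `p` vanishes (`sum_pow_mul_eval`).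
-/

/-- The function `ω(u,v|n)`, given by its defining product for every natural number `n`
without reduction modulo `N`, and for an arbitrary `ζ`. -/
noncomputable def omegaFn (ζ u v : ℂ) (n : ℕ) : ℂ :=
  ∏ t ∈ Finset.Icc 1 n, v * (1 - u * ζ ^ t)⁻¹

lemma omegaFn_succ (ζ u v : ℂ) (n : ℕ) :
    omegaFn ζ u v (n + 1) = omegaFn ζ u v n * (v * (1 - u * ζ ^ (n + 1))⁻¹) := by
  unfold omegaFn
  rw [Finset.prod_Icc_succ_top (by omega)]

lemma omegaFn_ne_zero {ζ u v : ℂ} (hv : v ≠ 0) (h : ∀ t : ℕ, 1 - u * ζ ^ t ≠ 0) (n : ℕ) :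
    omegaFn ζ u v n ≠ 0 :=
  Finset.prod_ne_zero_iff.2 fun t _ => mul_ne_zero hv (inv_ne_zero (h t))

lemma omega_shift {ζ u v : ℂ} (hζ : ζ ≠ 0) (h : ∀ t : ℕ, 1 - u * ζ ^ t ≠ 0) (n : ℕ) :
    omegaFn ζ (u / ζ) v n = omegaFn ζ u v n * (1 - u * ζ ^ n) / (1 - u) := by
  have h0 : 1 - u ≠ 0 := by simpa using h 0
  induction n with
  | zero => simp [omegaFn, h0]
  | succ n ih =>
    have e : u / ζ * ζ ^ (n + 1) = u * ζ ^ n := by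
      field_simp
      ring
    rw [omegaFn_succ, omegaFn_succ, ih, e]
    have h1 := h n
    have h2 := h (n + 1)
    field_simp

/-- `∏ (1 - uζᵗ) = 1 - u^N` over a full period of exponents. -/
lemma prod_one_sub {N : ℕ} [NeZero N] {ζ : ℂ} (hp : IsPrimitiveRoot ζ N) (u : ℂ) :
    ∏ t ∈ Finset.Icc 1 N, (1 - u * ζ ^ t) = 1 - u ^ N := by
  have hN : 0 < N := Nat.pos_of_ne_zero (NeZero.ne N)
  have e := congrArg (Polynomial.eval 1) (X_pow_sub_C_eq_prod hp hN (rfl : u ^ N = u ^ N))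
  simp only [Polynomial.eval_sub, Polynomial.eval_pow, Polynomial.eval_X, Polynomial.eval_C,
    one_pow, Polynomial.eval_prod] at e
  have hr : ∏ t ∈ Finset.Icc 1 N, (1 - u * ζ ^ t) =
      ∏ t ∈ Finset.range N, (1 - u * ζ ^ (t + 1)) := by
    rw [← Finset.Ico_succ_right_eq_Icc, Finset.prod_Ico_eq_prod_range]
    simp [add_comm]
  rw [hr, e]
  obtain ⟨n, rfl⟩ : ∃ n, N = n + 1 := ⟨N - 1, by omega⟩
  -- the factors with exponents `0` and `N` agree
  rw [Finset.prod_range_succ, Finset.prod_range_succ', hp.pow_eq_one, pow_zero, mul_one, one_mul]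
  simp_rw [mul_comm u]

lemma omega_add_period {N : ℕ} [NeZero N] {ζ u v : ℂ} (hp : IsPrimitiveRoot ζ N)
    (hc : u ^ N + v ^ N = 1) (hv : v ≠ 0) (n : ℕ) :
    omegaFn ζ u v (n + N) = omegaFn ζ u v n := by
  induction n with
  | zero =>
    have : (1 : ℂ) - u ^ N = v ^ N := by linear_combination -hc
    rw [zero_add, omegaFn, Finset.prod_mul_distrib, Finset.prod_inv_distrib, prod_one_sub hp, this]
    simp [omegaFn, hv]
  | succ n ih =>
    rw [show n + 1 + N = (n + N) + 1 by ring, omegaFn_succ, omegaFn_succ, ih,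
      show n + N + 1 = n + 1 + N by ring, pow_add ζ (n + 1) N, hp.pow_eq_one, mul_one]

lemma omega_mod {N : ℕ} [NeZero N] {ζ u v : ℂ} (hp : IsPrimitiveRoot ζ N)
    (hc : u ^ N + v ^ N = 1) (hv : v ≠ 0) (n : ℕ) :
    omegaFn ζ u v (n % N) = omegaFn ζ u v n :=
  Function.Periodic.map_mod_nat (omega_add_period hp hc hv) n

lemma sum_root_pow {N : ℕ} {ζ : ℂ} (hp : IsPrimitiveRoot ζ N) {k : ℕ} (hk : ¬ N ∣ k) :
    ∑ p ∈ Finset.range N, (ζ ^ p) ^ k = 0 := by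
  have h1 : ζ ^ k ≠ 1 := fun e => hk ((hp.pow_eq_one_iff_dvd k).1 e)
  simp_rw [← pow_mul, mul_comm _ k, pow_mul]
  rw [geom_sum_eq h1, ← pow_mul, mul_comm, pow_mul, hp.pow_eq_one]
  simp

lemma sum_inv_one_sub {N : ℕ} [NeZero N] {ζ u : ℂ} (hp : IsPrimitiveRoot ζ N)
    (hu : 1 - u ^ N ≠ 0) (h : ∀ t : ℕ, 1 - u * ζ ^ t ≠ 0) :
    ∑ p ∈ Finset.range N, (1 - u * ζ ^ p)⁻¹ = N / (1 - u ^ N) := by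
  have key : ∀ p : ℕ, (1 - u * ζ ^ p)⁻¹ =
      (∑ k ∈ Finset.range N, u ^ k * (ζ ^ p) ^ k) / (1 - u ^ N) := by
    intro p
    have e := mul_neg_geom_sum (u * ζ ^ p) N
    have e2 : (u * ζ ^ p) ^ N = u ^ N := by
      rw [mul_pow, ← pow_mul, mul_comm p, pow_mul, hp.pow_eq_one, one_pow, mul_one]
    rw [e2] at e
    rw [eq_div_iff hu, inv_mul_eq_iff_eq_mul₀ (h p), ← e]
    simp_rw [mul_pow]
  simp_rw [key]
  rw [← Finset.sum_div, Finset.sum_comm]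
  congr 1
  simp_rw [← Finset.mul_sum]
  rw [Finset.sum_eq_single 0]
  · simp
  · intro k hk hk0
    rw [sum_root_pow hp, mul_zero]
    exact Nat.not_dvd_of_pos_of_lt (Nat.pos_of_ne_zero hk0) (Finset.mem_range.1 hk)
  · intro h0
    exact absurd (Finset.mem_range.2 (Nat.pos_of_ne_zero (NeZero.ne N))) h0

/-- A polynomial whose exponents all lie in `1, …, N - 1` sums to zero over the `N`-th roots of
unity; here it is `X ^ (N - d) * Q` with `deg Q < d < N`. -/
lemma sum_pow_mul_eval {N d : ℕ} {ζ : ℂ} (hp : IsPrimitiveRoot ζ N) (hd : d < N)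
    (Q : Polynomial ℂ) (hQ : Q.natDegree < d) :
    ∑ p ∈ Finset.range N, (ζ ^ p) ^ (N - d) * Q.eval (ζ ^ p) = 0 := by
  simp_rw [Polynomial.eval_eq_sum_range' hQ, Finset.mul_sum]
  rw [Finset.sum_comm]
  refine Finset.sum_eq_zero fun k hk => ?_
  have hk := Finset.mem_range.1 hk
  have h0 : ∑ p ∈ Finset.range N, (ζ ^ p) ^ (N - d + k) = 0 :=
    sum_root_pow hp (Nat.not_dvd_of_pos_of_lt (by omega) (by omega))
  rw [← mul_zero (Q.coeff k), ← h0, Finset.mul_sum]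
  refine Finset.sum_congr rfl fun p _ => ?_
  rw [pow_add]
  ring

lemma omega_ratio {ζ u v : ℂ} (hv : v ≠ 0) (h : ∀ t : ℕ, 1 - u * ζ ^ t ≠ 0) (p e : ℕ) :
    omegaFn ζ u v p / (omegaFn ζ u v (p + (e + 1)) * (1 - u * ζ ^ (p + (e + 1)))) =
      (v ^ (e + 1))⁻¹ * ∏ t ∈ Finset.range e, (1 - u * ζ ^ (t + 1) * ζ ^ p) := by
  have hw := omegaFn_ne_zero hv h
  induction e with
  | zero =>
    have h1 := h (p + 1)
    have h2 := hw p
    rw [omegaFn_succ]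
    simp
    field_simp
  | succ e ih =>
    have h1 := h (p + (e + 1))
    have h2 := h (p + (e + 1) + 1)
    have h3 := hw (p + (e + 1))
    rw [Finset.prod_range_succ, ← mul_assoc, pow_succ v, mul_inv, mul_right_comm (v ^ (e + 1))⁻¹,
      ← ih, ← add_assoc p (e + 1) 1, omegaFn_succ]
    have e1 : u * ζ ^ (e + 1) * ζ ^ p = u * ζ ^ (p + (e + 1)) := by ring
    rw [e1]
    field_simp

/-- The one-variable orthogonality relation behind `L * M = 1`; the phase `ζ^{-pd}` is written
as `(ζᵖ) ^ (N - d)`. -/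
lemma omega_orthogonality {N : ℕ} [NeZero N] {ζ u v : ℂ} (hp : IsPrimitiveRoot ζ N)
    (hu : 1 - u ^ N ≠ 0) (hv : v ≠ 0) (h : ∀ t : ℕ, 1 - u * ζ ^ t ≠ 0) {d : ℕ} (hd : d < N) :
    ∑ p ∈ Finset.range N, (ζ ^ p) ^ (N - d) *
      (omegaFn ζ u v p * (omegaFn ζ (u / ζ) v (p + d))⁻¹) =
      if d = 0 then N * (1 - u) / (1 - u ^ N) else 0 := by
  have h0 : 1 - u ≠ 0 := by simpa using h 0
  have hζ : ζ ≠ 0 := hp.ne_zero (NeZero.ne N)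
  have hw := omegaFn_ne_zero hv h
  rcases d with _ | e
  · rw [if_pos rfl, mul_div_right_comm, ← sum_inv_one_sub hp hu h, Finset.sum_mul]
    refine Finset.sum_congr rfl fun p _ => ?_
    have h1 := h p
    have h2 := hw p
    rw [omega_shift hζ h, ← pow_mul, Nat.sub_zero, mul_comm p, pow_mul, hp.pow_eq_one, one_pow,
      add_zero]
    field_simp
  · rw [if_neg (by omega)]
    let Q : Polynomial ℂ := ∏ t ∈ Finset.range e,
      (1 - Polynomial.C (u * ζ ^ (t + 1)) * Polynomial.X)
    have hQ : Q.natDegree < e + 1 := by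
      refine Nat.lt_succ_of_le ((Polynomial.natDegree_prod_le _ _).trans ?_)
      refine (Finset.sum_le_card_nsmul _ _ 1 fun t _ => ?_).trans (by simp)
      compute_degree
    rw [← mul_zero ((1 - u) * (v ^ (e + 1))⁻¹), ← sum_pow_mul_eval hp hd Q hQ, Finset.mul_sum]
    refine Finset.sum_congr rfl fun p _ => ?_
    have hr := omega_ratio hv h p e
    have hE : Q.eval (ζ ^ p) = ∏ t ∈ Finset.range e, (1 - u * ζ ^ (t + 1) * ζ ^ p) := by
      simp [Q, Polynomial.eval_prod]
    rw [hE, mul_left_comm _ ((ζ ^ p) ^ (N - (e + 1))), mul_assoc (1 - u), ← hr, omega_shift hζ h]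
    have h1 := h (p + (e + 1))
    have h2 := hw (p + (e + 1))
    field_simp

lemma root_zpow_congr {N : ℕ} {ζ : ℂ} (hp : IsPrimitiveRoot ζ N) (hζ : ζ ≠ 0) {a b : ℤ}
    (hab : (a : ZMod N) = b) : ζ ^ a = ζ ^ b := by
  have h1 : ζ ^ (a - b) = 1 :=
    (hp.zpow_eq_one_iff_dvd _).2 ((ZMod.intCast_zmod_eq_zero_iff_dvd _ _).1 (by simp [hab]))
  rwa [zpow_sub₀ hζ, div_eq_one_iff_eq (zpow_ne_zero _ hζ)] at h1

lemma sum_zmod_val {N : ℕ} [NeZero N] (f : ℕ → ℂ) :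
    ∑ p : ZMod N, f p.val = ∑ p ∈ Finset.range N, f p :=
  Finset.sum_nbij' (fun p => p.val) (fun p => (p : ZMod N))
    (fun p _ => Finset.mem_range.2 p.val_lt) (fun _ _ => Finset.mem_univ _)
    (fun p _ => by simp) (fun p hp => ZMod.val_cast_of_lt (Finset.mem_range.1 hp))
    (fun _ _ => rfl)


/-- For odd `N ≥ 3`, `m = (N-1)/2`, `ζ = exp(2πi/N)`, and
`(u,v) ∈ (ℂ*)²` with `u^N + v^N = 1` (hence `u^N ≠ 1`), the `N²×N²` matrices
`L (i,j) (k,l) = ζ^{kj+(m+1)k²} ω(u,v|i-k) δ_N(i+j-l)` and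
`M (k,l) (i,j) = [u] ζ^{-kj-(m+1)k²} δ_N(i+j-l) ω(u/ζ,v|i-k)⁻¹`,
where `[u] = N⁻¹(1-u^N)/(1-u)` and `ω(a,v|n) = ∏_{t=1}^{[n]_N} v(1-aζ^t)⁻¹`,
are two-sided inverses of each other. -/
theorem stmt13 (N : ℕ) [NeZero N] (hNodd : Odd N) (hN3 : 3 ≤ N)
    (m : ℕ) (hm : m = (N - 1) / 2)
    (ζ : ℂ) (hζ : ζ = Complex.exp (2 * Real.pi * Complex.I / N))
    (u v : ℂ) (hu : u ≠ 0) (hv : v ≠ 0)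
    (hcurve : u ^ N + v ^ N = 1)
    (L M : Matrix (ZMod N × ZMod N) (ZMod N × ZMod N) ℂ)
    (hL : ∀ i j k l : ZMod N, L (i, j) (k, l) =
      ζ ^ (k.val * j.val + (m + 1) * k.val ^ 2)
        * (∏ t ∈ Finset.Icc 1 (i - k).val, v * (1 - u * ζ ^ t)⁻¹)
        * (if i + j = l then 1 else 0))
    (hM : ∀ k l i j : ZMod N, M (k, l) (i, j) =
      ((1 - u ^ N) / ((N : ℂ) * (1 - u)))
        * ζ ^ (-((k.val * j.val + (m + 1) * k.val ^ 2 : ℕ) : ℤ))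
        * (if i + j = l then 1 else 0)
        * (∏ t ∈ Finset.Icc 1 (i - k).val, v * (1 - (u / ζ) * ζ ^ t)⁻¹)⁻¹) :
    L * M = 1 ∧ M * L = 1 := by
  have hp : IsPrimitiveRoot ζ N := by
    rw [hζ]
    exact Complex.isPrimitiveRoot_exp N (NeZero.ne N)
  have hζ0 : ζ ≠ 0 := hp.ne_zero (NeZero.ne N)
  have huN : 1 - u ^ N ≠ 0 := by
    rw [← hcurve, add_sub_cancel_left]
    exact pow_ne_zero _ hv
  have h : ∀ t : ℕ, 1 - u * ζ ^ t ≠ 0 := by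
    intro t ht
    apply huN
    have e : u * ζ ^ t = 1 := (sub_eq_zero.1 ht).symm
    have e2 := congrArg (· ^ N) e
    simp only [mul_pow, one_pow] at e2
    rw [← pow_mul, mul_comm t, pow_mul, hp.pow_eq_one, one_pow, mul_one] at e2
    rw [e2, sub_self]
  have h0 : 1 - u ≠ 0 := by simpa using h 0
  have hNC : (N : ℂ) ≠ 0 := Nat.cast_ne_zero.2 (NeZero.ne N)
  have main : L * M = 1 := by
    ext ⟨i, j⟩ ⟨i', j'⟩
    rw [Matrix.mul_apply, Fintype.sum_prod_type]
    simp_rw [hL, hM]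
    by_cases hs : i' + j' = i + j
    swap
    · have hne : ((i, j) : ZMod N × ZMod N) ≠ (i', j') := by
        rintro e
        rw [Prod.mk.injEq] at e
        exact hs (by rw [e.1, e.2])
      rw [Matrix.one_apply_ne hne]
      refine Finset.sum_eq_zero fun k _ => Finset.sum_eq_zero fun l _ => ?_
      by_cases h1 : i + j = l
      · simp [← h1, hs]
      · simp [h1]
    set d : ℕ := (i' - i).val with hd
    have hdN : d < N := ZMod.val_lt _
    have hdc : (d : ZMod N) = i' - i := by simp [hd]
    have step : ∀ k : ZMod N, ∑ l : ZMod N,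
        (ζ ^ (k.val * j.val + (m + 1) * k.val ^ 2)
          * (∏ t ∈ Finset.Icc 1 (i - k).val, v * (1 - u * ζ ^ t)⁻¹)
          * (if i + j = l then 1 else 0))
        * (((1 - u ^ N) / ((N : ℂ) * (1 - u)))
          * ζ ^ (-((k.val * j'.val + (m + 1) * k.val ^ 2 : ℕ) : ℤ))
          * (if i' + j' = l then 1 else 0)
          * (∏ t ∈ Finset.Icc 1 (i' - k).val, v * (1 - (u / ζ) * ζ ^ t)⁻¹)⁻¹) =
        ((1 - u ^ N) / ((N : ℂ) * (1 - u)) * ζ ^ (i.val * d)) *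
          ((ζ ^ (i - k).val) ^ (N - d) * (omegaFn ζ u v (i - k).val *
            (omegaFn ζ (u / ζ) v ((i - k).val + d))⁻¹)) := by
      intro k
      rw [Finset.sum_eq_single (i + j) (fun l _ hl => by simp [hl.symm]) (by simp), if_pos rfl,
        if_pos hs]
      have hshift : omegaFn ζ (u / ζ) v (i' - k).val =
          omegaFn ζ (u / ζ) v ((i - k).val + d) := by
        have hval : (i' - k).val = ((i - k).val + d) % N := by
          rw [hd, ← ZMod.val_add]
          congr 1
          ring
        have hpow : ∀ n : ℕ, ζ ^ (n % N) = ζ ^ n := fun n =>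
          (pow_eq_pow_mod n hp.pow_eq_one).symm
        rw [hval, omega_shift hζ0 h, omega_shift hζ0 h, omega_mod hp hcurve hv,
          hpow]
      have hphase : ζ ^ (k.val * j.val + (m + 1) * k.val ^ 2) *
          ζ ^ (-((k.val * j'.val + (m + 1) * k.val ^ 2 : ℕ) : ℤ)) =
          ζ ^ (i.val * d) * (ζ ^ (i - k).val) ^ (N - d) := by
        rw [← pow_mul, ← pow_add, ← zpow_natCast, ← zpow_natCast, ← zpow_add₀ hζ0]
        apply root_zpow_congr hp hζ0
        -- modulo `N` the exponents are `k (j - j')` and `(i - (i - k)) d`, with `d = i' - i = j - j'`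
        push_cast [Nat.cast_sub hdN.le, hdc]
        simp only [ZMod.natCast_val, ZMod.cast_id', id_eq, CharP.cast_eq_zero]
        linear_combination (-k) * hs
      change _ * omegaFn ζ u v (i - k).val * _ *
        (_ * _ * _ * (omegaFn ζ (u / ζ) v (i' - k).val)⁻¹) = _
      rw [hshift]
      linear_combination ((1 - u ^ N) / ((N : ℂ) * (1 - u)) * omegaFn ζ u v (i - k).val *
        (omegaFn ζ (u / ζ) v ((i - k).val + d))⁻¹) * hphase
    rw [Finset.sum_congr rfl fun k _ => step k, ← Finset.mul_sum,
      show ∑ k : ZMod N, (ζ ^ (i - k).val) ^ (N - d) * (omegaFn ζ u v (i - k).val *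
          (omegaFn ζ (u / ζ) v ((i - k).val + d))⁻¹) = _ from (Equiv.subLeft i).sum_comp (fun p : ZMod N => (ζ ^ p.val) ^ (N - d) *
        (omegaFn ζ u v p.val * (omegaFn ζ (u / ζ) v (p.val + d))⁻¹)),
      sum_zmod_val (fun p => (ζ ^ p) ^ (N - d) *
        (omegaFn ζ u v p * (omegaFn ζ (u / ζ) v (p + d))⁻¹)),
      omega_orthogonality hp huN hv h hdN]
    by_cases hd0 : d = 0
    · have hi : i' = i := by
        rw [hd0, Nat.cast_zero] at hdc
        exact sub_eq_zero.1 hdc.symm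
      have hj : j' = j := by
        rw [hi] at hs
        exact add_left_cancel hs
      rw [if_pos hd0, hi, hj, Matrix.one_apply_eq, hd0, mul_zero, pow_zero]
      field_simp
    · rw [if_neg hd0, mul_zero, Matrix.one_apply_ne]
      rintro e
      rw [Prod.mk.injEq] at e
      exact hd0 (by rw [hd, e.1, sub_self, ZMod.val_zero])
  exact ⟨main, mul_eq_one_comm.1 main⟩
end
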